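/- arXiv:2103.07809 — 2 statements merged into one kernel-verified Lean document; each statement's English description precedes it below -/
import Mathlib

section
/- Let g : ℝ^n → ℝ be a polynomial that is (R,θ)-attenuated, where R ≥ √2 and 0 ≤ θ ≤ 1, and write μ = E_{x∼N(0,1)^n}[g(x)]. Then for any 0 < γ ≤ 1, the probability over x ∼ N(0,1)^n that g(x) ≈_γ μ fails to hold is at most (2√θ/γ)^{R²/2 + 1}. -/
open MeasureTheory ProbabilityTheory MvPolynomial

/-- The standard Gaussian measure `N(0,1)^n` on `ℝ^n`. -/
noncomputable def gaussianN (n : ℕ) : Measure (Fin n → ℝ) :=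
  Measure.pi fun _ => gaussianReal 0 1

/-- The normalized probabilists' Hermite polynomial `h_k = H_k / √(k!)`. -/
noncomputable def hermiteFn (k : ℕ) (t : ℝ) : ℝ :=
  ((Polynomial.hermite k).map (Int.castRingHom ℝ)).eval t / Real.sqrt (Nat.factorial k)

/-- The multivariate Hermite polynomial `h_α(x) = ∏ i, h_{α i}(x i)`. -/
noncomputable def hermiteMv {n : ℕ} (α : Fin n → ℕ) (x : Fin n → ℝ) : ℝ :=
  ∏ i, hermiteFn (α i) (x i)

/-- Hermite coefficient `f̂(α) = E_{x ∼ N(0,1)^n}[f(x)·h_α(x)]` of a function. -/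
noncomputable def hermiteCoeffF {n : ℕ} (f : (Fin n → ℝ) → ℝ) (α : Fin n → ℕ) : ℝ :=
  ∫ x, f x * hermiteMv α x ∂(gaussianN n)

/-- Hermite coefficient `ĝ(α)` of a polynomial. -/
noncomputable def hermiteCoeff {n : ℕ} (g : MvPolynomial (Fin n) ℝ) (α : Fin n → ℕ) : ℝ :=
  hermiteCoeffF (fun x => eval x g) α

/-- The squared Gaussian 2-norm `‖g‖₂² = E_{x ∼ N(0,1)^n}[g(x)²]`. -/
noncomputable def norm2sq {n : ℕ} (g : MvPolynomial (Fin n) ℝ) : ℝ :=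
  ∫ x, (eval x g) ^ 2 ∂(gaussianN n)

/-- The `λ`-zoom of `g` at `x`: `g_{λ|x}(y) = g(√(1-λ)·x + √λ·y)`, as a polynomial in `y`. -/
noncomputable def zoom {n : ℕ} (g : MvPolynomial (Fin n) ℝ) (lam : ℝ) (x : Fin n → ℝ) :
    MvPolynomial (Fin n) ℝ :=
  aeval (fun i => C (Real.sqrt (1 - lam) * x i) + C (Real.sqrt lam) * X i) g

/-- `HyperVar_R[g^{≥m}] = Σ_{|α| ≥ m} R^{2|α|}·ĝ(α)²`. -/
noncomputable def hyperVarGE {n : ℕ} (R : ℝ) (m : ℕ) (g : MvPolynomial (Fin n) ℝ) : ℝ :=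
  ∑' α : Fin n → ℕ, if m ≤ ∑ i, α i then R ^ (2 * ∑ i, α i) * hermiteCoeff g α ^ 2 else 0

/-- `HyperVar_R[g] = Σ_{α ≠ 0} R^{2|α|}·ĝ(α)²`. -/
noncomputable def hyperVar {n : ℕ} (R : ℝ) (g : MvPolynomial (Fin n) ℝ) : ℝ :=
  hyperVarGE R 1 g

/-- A nice distribution of polynomials of degree at most `d` on `ℝ^n`, indexed by
`υ ∈ ℝ^I`: each `g υ` has degree at most `d` and each coefficient of `g υ` is a
polynomial of degree at most `d` in `υ`. -/
def NiceFamily (n I d : ℕ) (g : (Fin I → ℝ) → MvPolynomial (Fin n) ℝ) : Prop :=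
  (∀ υ, (g υ).totalDegree ≤ d) ∧
  ∀ m : Fin n →₀ ℕ, ∃ P : MvPolynomial (Fin I) ℝ,
    P.totalDegree ≤ d ∧ ∀ υ, coeff m (g υ) = eval υ P

/-- `a ≈_ν b`: either both are zero, or they have the same sign and
`e^{-ν} ≤ a/b ≤ e^ν`. -/
def MulClose (ν a b : ℝ) : Prop :=
  (a = 0 ∧ b = 0) ∨ (0 < a * b ∧ Real.exp (-ν) ≤ a / b ∧ a / b ≤ Real.exp ν)

/-- Continuous functions of at most polynomial growth. -/
def PolyGrowth {E : Type*} [NormedAddCommGroup E] (F : E → ℝ) : Prop :=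
  Continuous F ∧ ∃ (C : ℝ) (k : ℕ), ∀ x, |F x| ≤ C * (1 + ‖x‖) ^ k

namespace PolyGrowth

variable {E : Type*} [NormedAddCommGroup E] {F G : E → ℝ}

lemma exists_nonneg_bound (hF : PolyGrowth F) :
    ∃ (C : ℝ) (k : ℕ), 0 ≤ C ∧ ∀ x, |F x| ≤ C * (1 + ‖x‖) ^ k := by
  obtain ⟨-, C, k, h⟩ := hF
  exact ⟨C, k, by simpa using (abs_nonneg _).trans (h 0), h⟩

lemma const (a : ℝ) : PolyGrowth (fun _ : E => a) :=
  ⟨continuous_const, |a|, 0, by simp⟩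

lemma of_abs_le_norm (hF : Continuous F) (h : ∀ x, |F x| ≤ ‖x‖) : PolyGrowth F :=
  ⟨hF, 1, 1, fun x => by linarith [h x]⟩

lemma mul (hF : PolyGrowth F) (hG : PolyGrowth G) : PolyGrowth (fun x => F x * G x) := by
  obtain ⟨C, k, hC, h⟩ := hF.exists_nonneg_bound
  obtain ⟨D, l, hD, h'⟩ := hG.exists_nonneg_bound
  refine ⟨hF.1.mul hG.1, C * D, k + l, fun x => ?_⟩
  rw [abs_mul]
  calc |F x| * |G x| ≤ (C * (1 + ‖x‖) ^ k) * (D * (1 + ‖x‖) ^ l) := by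
        gcongr
        exacts [h x, h' x]
    _ = _ := by ring

lemma add (hF : PolyGrowth F) (hG : PolyGrowth G) : PolyGrowth (fun x => F x + G x) := by
  obtain ⟨C, k, hC, h⟩ := hF.exists_nonneg_bound
  obtain ⟨D, l, hD, h'⟩ := hG.exists_nonneg_bound
  refine ⟨hF.1.add hG.1, C + D, k + l, fun x => ?_⟩
  have h1 : (1 : ℝ) ≤ 1 + ‖x‖ := by linarith [norm_nonneg x]
  calc |F x + G x| ≤ |F x| + |G x| := abs_add_le _ _
    _ ≤ C * (1 + ‖x‖) ^ k + D * (1 + ‖x‖) ^ l := add_le_add (h x) (h' x)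
    _ ≤ C * (1 + ‖x‖) ^ (k + l) + D * (1 + ‖x‖) ^ (k + l) := by
        gcongr <;> first | exact h1 | omega
    _ = _ := by ring

lemma pow (hF : PolyGrowth F) (m : ℕ) : PolyGrowth (fun x => F x ^ m) := by
  induction m with
  | zero => simpa using const (E := E) 1
  | succ m ih => simpa [pow_succ] using ih.mul hF

lemma sub (hF : PolyGrowth F) (hG : PolyGrowth G) : PolyGrowth (fun x => F x - G x) := by
  simpa [sub_eq_add_neg] using hF.add ((const (-1)).mul hG)

lemma abs (hF : PolyGrowth F) : PolyGrowth (fun x => |F x|) := by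
  obtain ⟨hc, C, k, h⟩ := hF
  exact ⟨hc.abs, C, k, by simpa using h⟩

lemma sum {ι : Type*} (s : Finset ι) {F : ι → E → ℝ} (hF : ∀ i ∈ s, PolyGrowth (F i)) :
    PolyGrowth (fun x => ∑ i ∈ s, F i x) := by
  classical
  induction s using Finset.induction_on with
  | empty => simpa using const (E := E) 0
  | insert a s ha ih =>
    simp only [Finset.sum_insert ha]
    exact (hF a (by simp)).add (ih fun i hi => hF i (by simp [hi]))

lemma prod {ι : Type*} (s : Finset ι) {F : ι → E → ℝ} (hF : ∀ i ∈ s, PolyGrowth (F i)) :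
    PolyGrowth (fun x => ∏ i ∈ s, F i x) := by
  classical
  induction s using Finset.induction_on with
  | empty => simpa using const (E := E) 1
  | insert a s ha ih =>
    simp only [Finset.prod_insert ha]
    exact (hF a (by simp)).mul (ih fun i hi => hF i (by simp [hi]))

lemma polynomial_eval (p : Polynomial ℝ) (hF : PolyGrowth F) :
    PolyGrowth (fun x => p.eval (F x)) := by
  simp only [Polynomial.eval_eq_sum_range]
  exact sum _ fun i _ => (const _).mul (hF.pow i)

lemma coord {n : ℕ} (i : Fin n) : PolyGrowth (fun x : Fin n → ℝ => x i) :=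
  of_abs_le_norm (continuous_apply i) fun x => norm_le_pi_norm x i

/-- Fixing a bounded first variable gives a bound that is uniform in that variable. -/
lemma exists_bound_of_abs_le {F : ℝ × E → ℝ} (hF : PolyGrowth F) (K : ℝ) :
    ∃ (C : ℝ) (k : ℕ), ∀ s x, |s| ≤ K → |F (s, x)| ≤ C * (1 + ‖x‖) ^ k := by
  obtain ⟨C, k, hC, h⟩ := hF.exists_nonneg_bound
  refine ⟨C * (1 + |K|) ^ k, k, fun s x hs => (h (s, x)).trans ?_⟩
  rw [mul_assoc, ← mul_pow]
  gcongr
  have h1 : ‖((s, x) : ℝ × E)‖ ≤ |s| + ‖x‖ := by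
    rw [Prod.norm_def]
    exact max_le (by simp) (by simp)
  have h2 := le_abs_self K
  nlinarith [norm_nonneg x, abs_nonneg K, mul_nonneg (abs_nonneg K) (norm_nonneg x)]

lemma of_prod {F : ℝ × E → ℝ} (hF : PolyGrowth F) (s : ℝ) : PolyGrowth (fun x => F (s, x)) := by
  obtain ⟨C, k, h⟩ := hF.exists_bound_of_abs_le |s|
  exact ⟨hF.1.comp (by fun_prop), C, k, fun x => h s x le_rfl⟩

end PolyGrowth

instance (n : ℕ) : IsProbabilityMeasure (gaussianN n) := by
  unfold gaussianN; infer_instance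

lemma integrable_one_add_abs_pow_gaussianReal (k : ℕ) :
    Integrable (fun t : ℝ => (1 + |t|) ^ k) (gaussianReal 0 1) := by
  have h0 : MemLp (fun t : ℝ => |t|) k (gaussianReal 0 1) :=
    MemLp.norm (f := fun t : ℝ => t) (memLp_id_gaussianReal' k (by simp))
  have h : MemLp (fun t : ℝ => 1 + |t|) k (gaussianReal 0 1) := (memLp_const (1 : ℝ)).add h0
  refine h.integrable_norm_pow' |>.congr (ae_of_all _ fun t => ?_)
  simp [abs_of_nonneg (show 0 ≤ 1 + |t| by positivity)]

lemma integrable_one_add_norm_pow (n k : ℕ) :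
    Integrable (fun x : Fin n → ℝ => (1 + ‖x‖) ^ k) (gaussianN n) := by
  have h : Integrable (fun x : Fin n → ℝ => ∏ i, (1 + |x i|) ^ k) (gaussianN n) :=
    Integrable.fintype_prod (f := fun _ t => (1 + |t|) ^ k)
      fun _ => integrable_one_add_abs_pow_gaussianReal k
  refine h.mono' (by fun_prop) (ae_of_all _ fun x => ?_)
  rw [Real.norm_of_nonneg (by positivity), Finset.prod_pow]
  gcongr
  have h2 : ∀ s : Finset (Fin n), 1 ≤ ∏ i ∈ s, (1 + |x i|) := fun s =>
    Finset.prod_induction _ (1 ≤ ·) (fun _ _ => one_le_mul_of_one_le_of_one_le) le_rfl (by simp)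
  have h1 : ∀ i, 1 + |x i| ≤ ∏ i, (1 + |x i|) := fun i => by
    rw [← Finset.mul_prod_erase _ _ (Finset.mem_univ i)]
    exact le_mul_of_one_le_right (by positivity) (h2 _)
  have h3 : ‖x‖ ≤ ∏ i, (1 + |x i|) - 1 :=
    (pi_norm_le_iff_of_nonneg (by linarith [h2 Finset.univ])).2 fun i => by
      have := h1 i
      rw [Real.norm_eq_abs]; linarith
  linarith

lemma PolyGrowth.integrable {n : ℕ} {F : (Fin n → ℝ) → ℝ} (hF : PolyGrowth F) :
    Integrable F (gaussianN n) := by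
  obtain ⟨hc, C, k, h⟩ := hF
  exact ((integrable_one_add_norm_pow n k).const_mul C).mono' hc.aestronglyMeasurable
    (ae_of_all _ h)

/-- Gaussian integration by parts in dimension one. -/
lemma integral_id_mul_gaussianReal {f f' : ℝ → ℝ} (hd : ∀ t, HasDerivAt f (f' t) t)
    (hf : Integrable f (gaussianReal 0 1)) (hxf : Integrable (fun t => t * f t) (gaussianReal 0 1))
    (hf' : Integrable f' (gaussianReal 0 1)) :
    ∫ t, t * f t ∂(gaussianReal 0 1) = ∫ t, f' t ∂(gaussianReal 0 1) := by
  have key : ∀ {h : ℝ → ℝ}, Integrable h (gaussianReal 0 1) →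
      Integrable (fun t => gaussianPDFReal 0 1 t * h t) := by
    intro h hh
    rw [gaussianReal_of_var_ne_zero _ one_ne_zero, integrable_withDensity_iff_integrable_smul'
      (measurable_gaussianPDF 0 1) (ae_of_all _ fun _ => gaussianPDF_lt_top)] at hh
    simpa [toReal_gaussianPDF] using hh
  have hpdf : ∀ t, HasDerivAt (gaussianPDFReal 0 1) (-t * gaussianPDFReal 0 1 t) t := by
    intro t
    have h1 : HasDerivAt (fun t : ℝ => -(t - 0) ^ 2 / (2 * ((1 : NNReal) : ℝ))) (-t) t := by
      have := (((hasDerivAt_id t).sub_const 0).pow 2).neg.div_const (2 * ((1 : NNReal) : ℝ))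
      convert! this using 1
      simp
      ring
    have h2 := h1.exp.const_mul (√(2 * Real.pi * ((1 : NNReal) : ℝ)))⁻¹
    convert! h2 using 1
    rw [gaussianPDFReal]
    ring
  have h0 := integral_eq_zero_of_hasDerivAt_of_integrable
    (fun t => (hpdf t).mul (hd t))
    (((key hf').sub (key hxf)).congr (ae_of_all _ fun t => by
      simp only [Pi.sub_apply]; ring)) (key hf)
  rw [integral_gaussianReal_eq_integral_smul one_ne_zero,
    integral_gaussianReal_eq_integral_smul one_ne_zero]
  simp only [smul_eq_mul]
  rw [← sub_eq_zero, ← integral_sub (key hxf) (key hf'), ← neg_eq_zero, ← integral_neg]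
  exact (integral_congr_ae (ae_of_all _ fun t => by simp; ring)).trans h0

/-- Gaussian integration by parts. -/
lemma integral_coord_mul_gaussianN {n : ℕ} (i : Fin n) {F F' : (Fin n → ℝ) → ℝ}
    (hd : ∀ x, HasDerivAt (fun t => F (Function.update x i t)) (F' x) (x i))
    (hF : PolyGrowth F) (hF' : PolyGrowth F') :
    ∫ x, x i * F x ∂(gaussianN n) = ∫ x, F' x ∂(gaussianN n) := by
  obtain _ | m := n
  · exact i.elim0
  have mp := (measurePreserving_piFinSuccAbove (fun _ : Fin (m + 1) => gaussianReal 0 1) i).symm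
  have hint : ∀ {H : (Fin (m + 1) → ℝ) → ℝ}, PolyGrowth H →
      Integrable (fun p : ℝ × (Fin m → ℝ) => H (i.insertNth p.1 p.2))
        ((gaussianReal 0 1).prod (gaussianN m)) := fun hH =>
          mp.integrable_comp_of_integrable hH.integrable
  have hswap : ∀ {H : (Fin (m + 1) → ℝ) → ℝ}, PolyGrowth H →
      ∫ x, H x ∂(gaussianN (m + 1)) =
        ∫ y, ∫ t, H (i.insertNth t y) ∂(gaussianReal 0 1) ∂(gaussianN m) := by
    intro H hH
    rw [← integral_prod_symm _ (hint hH)]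
    exact (mp.integral_comp' H).symm
  have hxF := (PolyGrowth.coord i).mul hF
  rw [hswap hxF, hswap hF']
  refine integral_congr_ae ?_
  filter_upwards [(hint hF).prod_left_ae, (hint hxF).prod_left_ae, (hint hF').prod_left_ae]
    with y h1 h2 h3
  simp only [Fin.insertNth_apply_same] at h2 ⊢
  refine integral_id_mul_gaussianReal (fun t => ?_) h1 h2 h3
  simpa using hd (i.insertNth t y)

lemma derivative_hermite (k : ℕ) :
    Polynomial.derivative (Polynomial.hermite k) = k * Polynomial.hermite (k - 1) := by
  induction k with
  | zero => simp
  | succ k ih =>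
    rw [Polynomial.hermite_succ, Polynomial.derivative_sub, Polynomial.derivative_mul, ih]
    obtain _ | k := k
    · simp
    · simp
      ring

/-- The (unnormalized) Hermite polynomial `H_k` evaluated at `t` and scaled by `s ^ k`. -/
noncomputable def scaledHermite (k : ℕ) (s t : ℝ) : ℝ :=
  s ^ k * ((Polynomial.hermite k).map (Int.castRingHom ℝ)).eval t

lemma scaledHermite_zero (s t : ℝ) : scaledHermite 0 s t = 1 := by simp [scaledHermite]

lemma scaledHermite_zero_left (k : ℕ) (t : ℝ) :
    scaledHermite k 0 t = if k = 0 then 1 else 0 := by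
  obtain rfl | hk := eq_or_ne k 0
  · simp [scaledHermite_zero]
  · simp [scaledHermite, hk]

lemma hasDerivAt_scaledHermite (k : ℕ) (s t : ℝ) :
    HasDerivAt (scaledHermite k s) (s * (k * scaledHermite (k - 1) s t)) t := by
  have h := (((Polynomial.hermite k).map (Int.castRingHom ℝ)).hasDerivAt t).const_mul (s ^ k)
  convert! h using 1
  rw [Polynomial.derivative_map, derivative_hermite]
  obtain _ | k := k
  · simp
  · simp [scaledHermite]
    ring

lemma scaledHermite_succ (k : ℕ) (s t : ℝ) :
    scaledHermite (k + 1) s t =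
      s * t * scaledHermite k s t - s ^ 2 * (k * scaledHermite (k - 1) s t) := by
  have h : s * (s * (k * scaledHermite (k - 1) s t)) = s ^ (k + 1) *
      (((Polynomial.hermite k).derivative).map (Int.castRingHom ℝ)).eval t := by
    rw [derivative_hermite]
    obtain _ | k := k
    · simp
    · simp [scaledHermite]
      ring
  rw [sq, mul_assoc (s : ℝ) s, h]
  simp [scaledHermite, Polynomial.hermite_succ]
  ring

lemma hasDerivAt_scaledHermite_scale (k : ℕ) (s t : ℝ) :
    HasDerivAt (fun s => scaledHermite k s t)
      (k * (t * scaledHermite (k - 1) s t -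
        s * ((k - 1 : ℕ) * scaledHermite (k - 1 - 1) s t))) s := by
  have h := (hasDerivAt_pow k s).mul_const
    (((Polynomial.hermite k).map (Int.castRingHom ℝ)).eval t)
  convert! h using 1
  obtain _ | k := k
  · simp
  · obtain _ | k := k
    · simp [scaledHermite]
    · have := congrArg (fun p : Polynomial ℤ => (p.map (Int.castRingHom ℝ)).eval t)
        (Polynomial.hermite_succ (k + 1))
      rw [derivative_hermite] at this
      simp at this
      simp [scaledHermite, this]
      ring

lemma polyGrowth_scaledHermite (k : ℕ) {E : Type*} [NormedAddCommGroup E] {F G : E → ℝ}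
    (hF : PolyGrowth F) (hG : PolyGrowth G) :
    PolyGrowth (fun x => scaledHermite k (F x) (G x)) :=
  (hF.pow k).mul (hG.polynomial_eval _)

/-- The polynomial `∑ α, c_α s^|α| H_α`, as a function of the coefficients (encoded by a
polynomial `c`), the scale `s` and the point. This is the Ornstein–Uhlenbeck semigroup applied to
the Hermite expansion with coefficients `c`. -/
noncomputable def hermiteSum (n : ℕ) : MvPolynomial (Fin n) ℝ →ₗ[ℝ] ℝ → (Fin n → ℝ) → ℝ :=
  (basisMonomials (Fin n) ℝ).constr ℝ fun α s x => ∏ i, scaledHermite (α i) s (x i)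

section HermiteSum

variable {n : ℕ}

lemma hermiteSum_monomial (α : Fin n →₀ ℕ) (a s : ℝ) (x : Fin n → ℝ) :
    hermiteSum n (monomial α a) s x = a * ∏ i, scaledHermite (α i) s (x i) := by
  have h : monomial α a = a • basisMonomials (Fin n) ℝ α := by simp [smul_monomial]
  rw [h, map_smul, hermiteSum, Module.Basis.constr_basis]
  rfl

lemma hermiteSum_eq_sum (c : MvPolynomial (Fin n) ℝ) (s : ℝ) (x : Fin n → ℝ) :
    hermiteSum n c s x = ∑ α ∈ c.support, coeff α c * ∏ i, scaledHermite (α i) s (x i) := by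
  conv_lhs => rw [c.as_sum, map_sum]
  simp only [Finset.sum_apply, hermiteSum_monomial]

lemma hermiteSum_C (a s : ℝ) (x : Fin n → ℝ) : hermiteSum n (C a) s x = a := by
  rw [C_apply, hermiteSum_monomial]
  simp [scaledHermite_zero]

lemma hermiteSum_zero_scale (c : MvPolynomial (Fin n) ℝ) (x : Fin n → ℝ) :
    hermiteSum n c 0 x = coeff 0 c := by
  induction c using MvPolynomial.induction_on' with
  | monomial α a =>
    rw [hermiteSum_monomial, coeff_monomial]
    simp only [scaledHermite_zero_left, Finset.prod_ite_zero, Finset.prod_const_one]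
    simp [Finsupp.ext_iff]
  | add p q hp hq => simp [hp, hq]

lemma polyGrowth_hermiteSum_uncurry (c : MvPolynomial (Fin n) ℝ) :
    PolyGrowth (fun p : ℝ × (Fin n → ℝ) => hermiteSum n c p.1 p.2) := by
  simp only [hermiteSum_eq_sum]
  refine .sum _ fun α _ => (PolyGrowth.const _).mul (.prod _ fun i _ => ?_)
  exact polyGrowth_scaledHermite _
    (.of_abs_le_norm continuous_fst fun p => norm_fst_le p)
    (.of_abs_le_norm (by fun_prop) fun p => (norm_le_pi_norm p.2 i).trans (norm_snd_le p))

lemma polyGrowth_hermiteSum (c : MvPolynomial (Fin n) ℝ) (s : ℝ) :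
    PolyGrowth (hermiteSum n c s) :=
  (polyGrowth_hermiteSum_uncurry c).of_prod s

lemma hermiteSum_pderiv_monomial (i : Fin n) (α : Fin n →₀ ℕ) (a s : ℝ) (x : Fin n → ℝ) :
    hermiteSum n (pderiv i (monomial α a)) s x =
      a * ((∏ j ∈ Finset.univ.erase i, scaledHermite (α j) s (x j)) *
        (α i * scaledHermite (α i - 1) s (x i))) := by
  rw [pderiv_monomial, hermiteSum_monomial, ← Finset.mul_prod_erase _ _ (Finset.mem_univ i)]
  rw [Finset.prod_congr rfl fun j hj => show
    scaledHermite ((α - Finsupp.single i 1 : Fin n →₀ ℕ) j) s (x j) = scaledHermite (α j) s (x j) by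
      simp [Finsupp.single_eq_of_ne (Finset.ne_of_mem_erase hj)]]
  simp
  ring

/-- Differentiating in a coordinate amounts to differentiating the coefficient polynomial. -/
lemma hasDerivAt_hermiteSum_update (c : MvPolynomial (Fin n) ℝ) (i : Fin n) (s : ℝ)
    (x : Fin n → ℝ) :
    HasDerivAt (fun t => hermiteSum n c s (Function.update x i t))
      (s * hermiteSum n (pderiv i c) s x) (x i) := by
  induction c using MvPolynomial.induction_on' with
  | monomial α a =>
    have h := (hasDerivAt_scaledHermite (α i) s (x i)).const_mul
      (a * ∏ j ∈ Finset.univ.erase i, scaledHermite (α j) s (x j))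
    convert! h using 1
    · funext t
      rw [hermiteSum_monomial, ← Finset.mul_prod_erase _ _ (Finset.mem_univ i)]
      rw [Finset.prod_congr rfl fun j hj => show
        scaledHermite (α j) s (Function.update x i t j) = scaledHermite (α j) s (x j) by
          rw [Function.update_of_ne (Finset.ne_of_mem_erase hj)]]
      simp
      ring
    · rw [hermiteSum_pderiv_monomial]
      ring
  | add p q hp hq =>
    convert! hp.add hq using 1
    · funext t; simp
    · simp; ring

/-- The evolution equation of the Ornstein–Uhlenbeck semigroup. -/
lemma hasDerivAt_hermiteSum_scale (c : MvPolynomial (Fin n) ℝ) (s : ℝ) (x : Fin n → ℝ) :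
    HasDerivAt (fun s => hermiteSum n c s x)
      (∑ i, (x i * hermiteSum n (pderiv i c) s x -
        s * hermiteSum n (pderiv i (pderiv i c)) s x)) s := by
  induction c using MvPolynomial.induction_on' with
  | monomial α a =>
    have h := (HasDerivAt.fun_finsetProd (u := Finset.univ) fun i _ =>
      hasDerivAt_scaledHermite_scale (α i) s (x i)).const_mul a
    convert! h using 1
    · funext t
      rw [hermiteSum_monomial]
    · rw [Finset.mul_sum]
      refine Finset.sum_congr rfl fun i _ => ?_
      rw [hermiteSum_pderiv_monomial, pderiv_monomial, hermiteSum_pderiv_monomial]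
      rw [Finset.prod_congr rfl fun j hj => show
        scaledHermite ((α - Finsupp.single i 1 : Fin n →₀ ℕ) j) s (x j) =
          scaledHermite (α j) s (x j) by
          simp [Finsupp.single_eq_of_ne (Finset.ne_of_mem_erase hj)]]
      simp
      ring
  | add p q hp hq =>
    convert! hp.add hq using 1
    · funext t; simp
    · rw [← Finset.sum_add_distrib]
      refine Finset.sum_congr rfl fun i _ => ?_
      simp; ring

lemma hermiteSum_X_mul (c : MvPolynomial (Fin n) ℝ) (i : Fin n) (s : ℝ) (x : Fin n → ℝ) :
    hermiteSum n (X i * c) s x =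
      s * x i * hermiteSum n c s x - s ^ 2 * hermiteSum n (pderiv i c) s x := by
  induction c using MvPolynomial.induction_on' with
  | monomial α a =>
    rw [hermiteSum_pderiv_monomial, hermiteSum_monomial, X, monomial_mul, hermiteSum_monomial,
      ← Finset.mul_prod_erase _ _ (Finset.mem_univ i),
      ← Finset.mul_prod_erase _ (fun i => scaledHermite (α i) s (x i)) (Finset.mem_univ i)]
    rw [Finset.prod_congr rfl fun j hj => show
      scaledHermite ((Finsupp.single i 1 + α : Fin n →₀ ℕ) j) s (x j) =
        scaledHermite (α j) s (x j) by
        simp [Finsupp.single_eq_of_ne (Finset.ne_of_mem_erase hj)]]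
    simp [add_comm 1 (α i), scaledHermite_succ]
    ring
  | add p q hp hq =>
    simp [mul_add, hp, hq]
    ring

/-- Every polynomial has a Hermite expansion. -/
lemma exists_hermiteSum_eq_eval (g : MvPolynomial (Fin n) ℝ) :
    ∃ c : MvPolynomial (Fin n) ℝ, ∀ x, hermiteSum n c 1 x = eval x g := by
  induction g using MvPolynomial.induction_on with
  | C a => exact ⟨C a, fun x => by simp [hermiteSum_C]⟩
  | add p q hp hq =>
    obtain ⟨c, hc⟩ := hp
    obtain ⟨d, hd⟩ := hq
    exact ⟨c + d, fun x => by simp [hc, hd]⟩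
  | mul_X p i hp =>
    obtain ⟨c, hc⟩ := hp
    exact ⟨X i * c + pderiv i c, fun x => by simp [hermiteSum_X_mul, hc, mul_comm (eval x p)]⟩

end HermiteSum

lemma hasDerivAt_abs_pow_mul_self (k : ℕ) (t : ℝ) :
    HasDerivAt (fun t => |t| ^ k * t) ((k + 1) * |t| ^ k) t := by
  induction k using Nat.twoStepInduction with
  | zero => simpa using hasDerivAt_id' t
  | one =>
    simp only [pow_one, Nat.cast_one]
    rcases lt_trichotomy t 0 with h | rfl | h
    · convert! (hasDerivAt_abs_neg h).mul (hasDerivAt_id t) using 1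
      simp [abs_of_neg h]; ring
    · rw [hasDerivAt_iff_isLittleO_nhds_zero]
      refine Asymptotics.isLittleO_iff.2 fun ε hε => ?_
      filter_upwards [Metric.ball_mem_nhds (0 : ℝ) hε] with h hh
      have : |h| < ε := by simpa using hh
      simpa using mul_le_mul_of_nonneg_right this.le (abs_nonneg h)
    · convert! (hasDerivAt_abs_pos h).mul (hasDerivAt_id t) using 1
      simp [abs_of_pos h]; ring
  | more k ih _ =>
    convert! (hasDerivAt_pow 2 t).mul ih using 1
    · funext t
      simp only [Pi.mul_apply, pow_add, sq_abs]; ring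
    · simp only [pow_add, sq_abs]; push_cast; ring

lemma hasDerivAt_abs_pow_add_two (k : ℕ) (t : ℝ) :
    HasDerivAt (fun t => |t| ^ (k + 2)) ((k + 2) * (|t| ^ k * t)) t := by
  convert! (hasDerivAt_id t).mul (hasDerivAt_abs_pow_mul_self k t) using 1
  · funext t
    simp only [Pi.mul_apply, pow_add, sq_abs, id]; ring
  · simp; ring

/-- Hölder's inequality with exponents `(k + 2) / k` and `(k + 2) / 2`. -/
lemma integral_abs_pow_mul_sq_le {n : ℕ} (k : ℕ) {F G : (Fin n → ℝ) → ℝ}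
    (hF : PolyGrowth F) (hG : PolyGrowth G) :
    ∫ x, |F x| ^ k * G x ^ 2 ∂(gaussianN n) ≤
      (∫ x, |F x| ^ (k + 2) ∂(gaussianN n)) ^ ((k : ℝ) / (k + 2)) *
        (∫ x, |G x| ^ (k + 2) ∂(gaussianN n)) ^ ((2 : ℝ) / (k + 2)) := by
  have hk : (0 : ℝ) < k + 2 := by positivity
  have hpow : ∀ (t : ℝ) (m : ℕ), (|t| ^ (k + 2)) ^ ((m : ℝ) / (k + 2)) = |t| ^ m := fun t m => by
    rw [← Real.rpow_natCast, ← Real.rpow_mul (abs_nonneg t), ← Real.rpow_natCast]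
    congr 1
    push_cast
    field_simp
  have h := ENNReal.lintegral_mul_norm_pow_le (μ := gaussianN n)
    (f := fun x => ENNReal.ofReal (|F x| ^ (k + 2)))
    (g := fun x => ENNReal.ofReal (|G x| ^ (k + 2)))
    (p := (k : ℝ) / (k + 2)) (q := (2 : ℝ) / (k + 2))
    (hF.abs.pow _).1.measurable.ennreal_ofReal.aemeasurable
    (hG.abs.pow _).1.measurable.ennreal_ofReal.aemeasurable
    (by positivity) (by positivity) (by field_simp)
  rw [← ofReal_integral_eq_lintegral_ofReal (hF.abs.pow _).integrable
      (ae_of_all _ fun x => by positivity),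
    ← ofReal_integral_eq_lintegral_ofReal (hG.abs.pow _).integrable
      (ae_of_all _ fun x => by positivity),
    ENNReal.ofReal_rpow_of_nonneg (integral_nonneg fun x => by positivity) (by positivity),
    ENNReal.ofReal_rpow_of_nonneg (integral_nonneg fun x => by positivity) (by positivity),
    ← ENNReal.ofReal_mul (Real.rpow_nonneg (integral_nonneg fun x => by positivity) _)] at h
  have hcongr : ∀ x, ENNReal.ofReal (|F x| ^ (k + 2)) ^ ((k : ℝ) / (k + 2)) *
      ENNReal.ofReal (|G x| ^ (k + 2)) ^ ((2 : ℝ) / (k + 2)) =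
      ENNReal.ofReal (|F x| ^ k * G x ^ 2) := fun x => by
    rw [ENNReal.ofReal_rpow_of_nonneg (by positivity) (by positivity),
      ENNReal.ofReal_rpow_of_nonneg (by positivity) (by positivity),
      ← ENNReal.ofReal_mul (by positivity), hpow, ← sq_abs (G x)]
    exact_mod_cast congrArg (fun t => ENNReal.ofReal (|F x| ^ k * t)) (hpow (G x) 2)
  simp only [hcongr] at h
  rw [← ofReal_integral_eq_lintegral_ofReal ((hF.abs.pow k).mul (hG.pow 2)).integrable
      (ae_of_all _ fun x => by positivity)] at h
  refine (ENNReal.ofReal_le_ofReal_iff (mul_nonneg ?_ ?_)).1 h <;>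
    exact Real.rpow_nonneg (integral_nonneg fun x => by positivity) _

section Hypercontractivity

variable {n : ℕ}

/-- Dissipation of the `L^(k+2)` norm along the Ornstein–Uhlenbeck semigroup. -/
lemma hasDerivAt_integral_hermiteSum (k : ℕ) (c : MvPolynomial (Fin n) ℝ) (s : ℝ) :
    HasDerivAt (fun s => ∫ x, |hermiteSum n c s x| ^ (k + 2) ∂(gaussianN n))
      ((k + 2) * ((k + 1) * s * ∑ i, ∫ x, |hermiteSum n c s x| ^ k *
        hermiteSum n (pderiv i c) s x ^ 2 ∂(gaussianN n))) s := by
  have hpg : ∀ c : MvPolynomial (Fin n) ℝ, PolyGrowth (hermiteSum n c s) :=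
    fun c => polyGrowth_hermiteSum c s
  set F' : ℝ → (Fin n → ℝ) → ℝ := fun s x => (k + 2) * (|hermiteSum n c s x| ^ k *
    hermiteSum n c s x) * ∑ i, (x i * hermiteSum n (pderiv i c) s x -
      s * hermiteSum n (pderiv i (pderiv i c)) s x) with hF'
  have hgrowth : PolyGrowth (fun p : ℝ × (Fin n → ℝ) => F' p.1 p.2) := by
    have h := polyGrowth_hermiteSum_uncurry (n := n)
    refine ((PolyGrowth.const _).mul (((h c).abs.pow k).mul (h c))).mul
      (.sum _ fun i _ => .sub (.mul ?_ (h _)) (.mul ?_ (h _)))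
    · exact .of_abs_le_norm (by fun_prop) fun p => (norm_le_pi_norm p.2 i).trans (norm_snd_le p)
    · exact .of_abs_le_norm continuous_fst fun p => norm_fst_le p
  obtain ⟨C, m, hC⟩ := hgrowth.exists_bound_of_abs_le (|s| + 1)
  have hderiv := (hasDerivAt_integral_of_dominated_loc_of_deriv_le (μ := gaussianN n)
    (F := fun s x => |hermiteSum n c s x| ^ (k + 2)) (F' := F') (x₀ := s)
    (bound := fun x => C * (1 + ‖x‖) ^ m) (Metric.ball_mem_nhds s one_pos)
    (.of_forall fun r => ((polyGrowth_hermiteSum c r).abs.pow _).1.aestronglyMeasurable)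
    ((hpg c).abs.pow _).integrable (hgrowth.of_prod s).1.aestronglyMeasurable
    (ae_of_all _ fun x r hr => hC r x ?_) ((integrable_one_add_norm_pow n m).const_mul C)
    (ae_of_all _ fun x r _ => ?_)).2
  · convert! hderiv using 1
    have hparts : ∀ i, ∫ x, x i * (|hermiteSum n c s x| ^ k * hermiteSum n c s x *
          hermiteSum n (pderiv i c) s x) ∂(gaussianN n) =
        ∫ x, ((k + 1) * |hermiteSum n c s x| ^ k * (s * hermiteSum n (pderiv i c) s x) *
          hermiteSum n (pderiv i c) s x + |hermiteSum n c s x| ^ k * hermiteSum n c s x *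
            (s * hermiteSum n (pderiv i (pderiv i c)) s x)) ∂(gaussianN n) := fun i => by
      refine integral_coord_mul_gaussianN i (fun x => ?_)
        ((((hpg c).abs.pow k).mul (hpg c)).mul (hpg _))
        (.add (((((PolyGrowth.const _).mul ((hpg c).abs.pow k))).mul
          ((PolyGrowth.const s).mul (hpg _))).mul (hpg _))
          ((((hpg c).abs.pow k).mul (hpg c)).mul ((PolyGrowth.const s).mul (hpg _))))
      have h1 := (hasDerivAt_abs_pow_mul_self k _).comp (x i) (hasDerivAt_hermiteSum_update c i s x)
      have h2 := h1.mul (hasDerivAt_hermiteSum_update (pderiv i c) i s x)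
      exact HasDerivAt.congr_deriv h2 (by simp)
    have hpoint : ∀ i, (k + 1) * s * ∫ x, |hermiteSum n c s x| ^ k *
          hermiteSum n (pderiv i c) s x ^ 2 ∂(gaussianN n) =
        ∫ x, |hermiteSum n c s x| ^ k * hermiteSum n c s x *
          (x i * hermiteSum n (pderiv i c) s x -
            s * hermiteSum n (pderiv i (pderiv i c)) s x) ∂(gaussianN n) := fun i => by
      have e1 : PolyGrowth (fun x => x i * (|hermiteSum n c s x| ^ k * hermiteSum n c s x *
          hermiteSum n (pderiv i c) s x)) :=
        (PolyGrowth.coord i).mul ((((hpg c).abs.pow k).mul (hpg c)).mul (hpg _))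
      have e2 : PolyGrowth (fun x => |hermiteSum n c s x| ^ k * hermiteSum n c s x *
          (s * hermiteSum n (pderiv i (pderiv i c)) s x)) :=
        (((hpg c).abs.pow k).mul (hpg c)).mul ((PolyGrowth.const s).mul (hpg _))
      have e3 : PolyGrowth (fun x => (k + 1) * |hermiteSum n c s x| ^ k *
          (s * hermiteSum n (pderiv i c) s x) * hermiteSum n (pderiv i c) s x) :=
        (((PolyGrowth.const _).mul ((hpg c).abs.pow k)).mul
          ((PolyGrowth.const s).mul (hpg _))).mul (hpg _)
      have h1 := hparts i
      rw [integral_add e3.integrable e2.integrable] at h1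
      rw [← integral_const_mul]
      trans ∫ x, (x i * (|hermiteSum n c s x| ^ k * hermiteSum n c s x *
          hermiteSum n (pderiv i c) s x)) ∂(gaussianN n) -
        ∫ x, (|hermiteSum n c s x| ^ k * hermiteSum n c s x *
          (s * hermiteSum n (pderiv i (pderiv i c)) s x)) ∂(gaussianN n)
      · rw [h1, add_sub_cancel_right]
        exact integral_congr_ae (ae_of_all _ fun x => by ring)
      · rw [← integral_sub e1.integrable e2.integrable]
        exact integral_congr_ae (ae_of_all _ fun x => by ring)
    simp only [hF', mul_assoc]
    rw [integral_const_mul]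
    congr 1
    simp only [← mul_assoc]
    rw [Finset.mul_sum, Finset.sum_congr rfl fun i _ => hpoint i, ← integral_finsetSum]
    · exact integral_congr_ae (ae_of_all _ fun x => by simp only [Finset.mul_sum])
    · exact fun i _ => ((((hpg c).abs.pow k).mul (hpg c)).mul
        (((PolyGrowth.coord i).mul (hpg _)).sub ((PolyGrowth.const s).mul (hpg _)))).integrable
  · have h1 : |r - s| < 1 := by simpa [Real.dist_eq] using hr
    have h2 := abs_add_le (r - s) s
    rw [sub_add_cancel] at h2
    linarith
  · exact (hasDerivAt_abs_pow_add_two k _).comp r (hasDerivAt_hermiteSum_scale c r x)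

lemma hasDerivAt_integral_hermiteSum_sq (c : MvPolynomial (Fin n) ℝ) (s : ℝ) :
    HasDerivAt (fun s => ∫ x, hermiteSum n c s x ^ 2 ∂(gaussianN n))
      (2 * (s * ∑ i, ∫ x, hermiteSum n (pderiv i c) s x ^ 2 ∂(gaussianN n))) s := by
  simpa using hasDerivAt_integral_hermiteSum 0 c s

lemma integral_hermiteSum_sq_mono (c : MvPolynomial (Fin n) ℝ) {r s : ℝ} (hr : 0 ≤ r)
    (hrs : r ≤ s) :
    ∫ x, hermiteSum n c r x ^ 2 ∂(gaussianN n) ≤ ∫ x, hermiteSum n c s x ^ 2 ∂(gaussianN n) := by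
  refine monotoneOn_of_hasDerivWithinAt_nonneg (convex_Ici 0)
    (fun s _ => (hasDerivAt_integral_hermiteSum_sq c s).continuousAt.continuousWithinAt)
    (fun s _ => (hasDerivAt_integral_hermiteSum_sq c s).hasDerivWithinAt) (fun s hs => ?_)
    hr (hr.trans hrs) hrs
  rw [interior_Ici] at hs
  have : 0 < s := hs
  have : 0 ≤ ∑ i, ∫ x, hermiteSum n (pderiv i c) s x ^ 2 ∂(gaussianN n) :=
    Finset.sum_nonneg fun i _ => integral_nonneg fun x => sq_nonneg _
  positivity

/-- **Gaussian hypercontractivity** for polynomials, from `L²` to `L^(k+2)`. -/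
theorem integral_abs_hermiteSum_rpow_le (k : ℕ) (c : MvPolynomial (Fin n) ℝ) {s : ℝ}
    (hs : 0 ≤ s) :
    (∫ x, |hermiteSum n c s x| ^ (k + 2) ∂(gaussianN n)) ^ ((2 : ℝ) / (k + 2)) ≤
      ∫ x, hermiteSum n c (√(k + 1) * s) x ^ 2 ∂(gaussianN n) := by
  have hk : (0 : ℝ) < k + 2 := by positivity
  suffices h : ∀ (d : ℕ) (c : MvPolynomial (Fin n) ℝ),
      (∀ α : Fin n →₀ ℕ, d ≤ α.degree → coeff α c = 0) → ∀ s : ℝ, 0 ≤ s →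
      (∫ x, |hermiteSum n c s x| ^ (k + 2) ∂(gaussianN n)) ^ ((2 : ℝ) / (k + 2)) ≤
        ∫ x, hermiteSum n c (√(k + 1) * s) x ^ 2 ∂(gaussianN n) by
    refine h (c.totalDegree + 1) c (fun α hα => ?_) s hs
    refine coeff_eq_zero_of_totalDegree_lt (lt_of_lt_of_le (Nat.lt_succ_self _) hα)
  clear hs s c
  intro d
  induction d with
  | zero =>
    intro c hc s _
    obtain rfl : c = 0 := by ext α; simpa using hc α zero_le
    simp [Real.zero_rpow (show (2 : ℝ) / (k + 2) ≠ 0 by positivity)]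
  | succ d ih =>
    intro c hc s hs
    have ih' := fun i => ih (pderiv i c) fun α hα => by
      rw [coeff_pderiv, hc, zero_mul]
      simpa using hα
    set Φ : ℝ → ℝ := fun s => ∫ x, |hermiteSum n c s x| ^ (k + 2) ∂(gaussianN n) with hΦ
    set B : ℝ → ℝ := fun s => ∫ x, hermiteSum n c (√(k + 1) * s) x ^ 2 ∂(gaussianN n) with hB
    set S : ℝ → ℝ := fun s => ∑ i, ∫ x, hermiteSum n (pderiv i c) (√(k + 1) * s) x ^ 2
      ∂(gaussianN n) with hS
    have hΦ0 : ∀ s, 0 ≤ Φ s := fun s => integral_nonneg fun x => by positivity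
    have hBd : ∀ s, HasDerivAt B (2 * (k + 1) * s * S s) s := fun s => by
      have h := (hasDerivAt_integral_hermiteSum_sq c (√(k + 1) * s)).comp s
        ((hasDerivAt_id s).const_mul √(k + 1))
      convert! h using 1
      have : √((k : ℝ) + 1) * √(k + 1) = k + 1 := Real.mul_self_sqrt (by positivity)
      linear_combination (-2 * s * S s) * this
    have hΦd : ∀ s, HasDerivAt Φ _ s := hasDerivAt_integral_hermiteSum k c
    have hΦle : ∀ s, 0 ≤ s → ∑ i, ∫ x, |hermiteSum n c s x| ^ k *
        hermiteSum n (pderiv i c) s x ^ 2 ∂(gaussianN n) ≤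
        Φ s ^ ((k : ℝ) / (k + 2)) * S s := fun s hs => by
      simp only [hS, Finset.mul_sum]
      gcongr with i
      refine (integral_abs_pow_mul_sq_le k (polyGrowth_hermiteSum c s)
        (polyGrowth_hermiteSum (pderiv i c) s)).trans ?_
      exact mul_le_mul_of_nonneg_left (ih' i s hs) (Real.rpow_nonneg (hΦ0 s) _)
    have hmono : ∀ ε > 0,
        MonotoneOn (fun s => B s - (Φ s + ε) ^ ((2 : ℝ) / (k + 2))) (Set.Ici 0) := by
      intro ε hε
      have hd : ∀ s, HasDerivAt (fun s => B s - (Φ s + ε) ^ ((2 : ℝ) / (k + 2))) _ s := fun s =>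
        (hBd s).sub (((hΦd s).add_const ε).rpow_const (p := (2 : ℝ) / (k + 2))
          (.inl (add_pos_of_nonneg_of_pos (hΦ0 s) hε).ne'))
      refine monotoneOn_of_hasDerivWithinAt_nonneg (convex_Ici 0)
        (fun s _ => (hd s).continuousAt.continuousWithinAt)
        (fun s _ => (hd s).hasDerivWithinAt) (fun s hs => ?_)
      rw [interior_Ici] at hs
      have hs : 0 < s := hs
      have hpos : 0 < Φ s + ε := add_pos_of_nonneg_of_pos (hΦ0 s) hε
      rw [sub_nonneg]
      have hexp : (2 : ℝ) / (k + 2) - 1 = -(k / (k + 2)) := by field_simp; ring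
      rw [hexp, Real.rpow_neg hpos.le]
      have h1 : Φ s ^ ((k : ℝ) / (k + 2)) * ((Φ s + ε) ^ ((k : ℝ) / (k + 2)))⁻¹ ≤ 1 := by
        rw [← div_eq_mul_inv]
        refine div_le_one_of_le₀ ?_ (Real.rpow_nonneg hpos.le _)
        exact Real.rpow_le_rpow (hΦ0 s) (by linarith) (by positivity)
      have h2 : 0 ≤ ((Φ s + ε) ^ ((k : ℝ) / (k + 2)))⁻¹ := by positivity
      calc _ ≤ (k + 2) * ((k + 1) * s * (Φ s ^ ((k : ℝ) / (k + 2)) * S s)) * (2 / (k + 2)) *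
              ((Φ s + ε) ^ ((k : ℝ) / (k + 2)))⁻¹ := by
            gcongr
            exact hΦle s hs.le
        _ = 2 * (k + 1) * s * S s *
              (Φ s ^ ((k : ℝ) / (k + 2)) * ((Φ s + ε) ^ ((k : ℝ) / (k + 2)))⁻¹) := by
            field_simp
        _ ≤ 2 * (k + 1) * s * S s * 1 := by
            gcongr
        _ = _ := mul_one _
    have hε : ∀ ε > 0, (Φ s + ε) ^ ((2 : ℝ) / (k + 2)) ≤
        B s - B 0 + (Φ 0 + ε) ^ ((2 : ℝ) / (k + 2)) := fun ε hε => by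
      have := hmono ε hε (Set.mem_Ici.2 le_rfl) hs hs
      simp only at this
      linarith
    have hlim : ∀ a : ℝ, Filter.Tendsto (fun ε : ℝ => (a + ε) ^ ((2 : ℝ) / (k + 2)))
        (nhdsWithin 0 (Set.Ioi 0)) (nhds (a ^ ((2 : ℝ) / (k + 2)))) := fun a => by
      have h : Continuous (fun ε : ℝ => (a + ε) ^ ((2 : ℝ) / (k + 2))) :=
        (continuous_const.add continuous_id).rpow_const fun _ => .inr (by positivity)
      simpa using (h.tendsto 0).mono_left nhdsWithin_le_nhds
    have hle := le_of_tendsto_of_tendsto (hlim (Φ s)) ((hlim (Φ 0)).const_add (B s - B 0))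
      (eventually_nhdsWithin_of_forall hε)
    have h0 : Φ 0 ^ ((2 : ℝ) / (k + 2)) = B 0 := by
      simp only [hΦ, hB, mul_zero, hermiteSum_zero_scale, integral_const, probReal_univ, one_smul]
      rw [← Real.rpow_natCast, ← Real.rpow_mul (abs_nonneg _), ← sq_abs, ← Real.rpow_natCast]
      congr 1
      push_cast
      field_simp
    rw [h0, sub_add_cancel] at hle
    exact hle

end Hypercontractivity

section Parseval

variable {n : ℕ}

lemma scaledHermite_eq_pow_mul (k : ℕ) (s t : ℝ) :
    scaledHermite k s t = s ^ k * scaledHermite k 1 t := by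
  simp [scaledHermite]

lemma integrable_scaledHermite_mul (j k : ℕ) {F : ℝ → ℝ} (hF : PolyGrowth F) :
    Integrable (fun t => F t * (scaledHermite j 1 t * scaledHermite k 1 t))
      (gaussianReal 0 1) := by
  have hid : PolyGrowth (fun t : ℝ => t) := .of_abs_le_norm continuous_id fun t => le_rfl
  obtain ⟨hc, C, m, h⟩ := hF.mul ((polyGrowth_scaledHermite j (.const 1) hid).mul
    (polyGrowth_scaledHermite k (.const 1) hid))
  exact ((integrable_one_add_abs_pow_gaussianReal m).const_mul C).mono' hc.aestronglyMeasurable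
    (ae_of_all _ h)

lemma integral_scaledHermite_succ_mul (j k : ℕ) :
    ∫ t, scaledHermite (j + 1) 1 t * scaledHermite k 1 t ∂(gaussianReal 0 1) =
      k * ∫ t, scaledHermite j 1 t * scaledHermite (k - 1) 1 t ∂(gaussianReal 0 1) := by
  have hint := fun j k a => integrable_scaledHermite_mul j k (.const a)
  have hid : PolyGrowth (fun t : ℝ => t) := .of_abs_le_norm continuous_id fun t => le_rfl
  have h1 := integral_id_mul_gaussianReal
    (fun t => (hasDerivAt_scaledHermite j 1 t).mul (hasDerivAt_scaledHermite k 1 t))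
    ((hint j k 1).congr (ae_of_all _ fun t => by simp)) (integrable_scaledHermite_mul j k hid)
    (((hint (j - 1) k j).add (hint j (k - 1) k)).congr (ae_of_all _ fun t => by
      simp only [Pi.add_apply]; ring))
  rw [← integral_const_mul]
  have h2 : ∀ t, scaledHermite (j + 1) 1 t * scaledHermite k 1 t =
      t * (scaledHermite j 1 t * scaledHermite k 1 t) -
        j * (scaledHermite (j - 1) 1 t * scaledHermite k 1 t) := fun t => by
    rw [scaledHermite_succ]; ring
  simp only [h2]
  rw [integral_sub (integrable_scaledHermite_mul j k hid) (hint (j - 1) k j), sub_eq_iff_eq_add,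
    ← integral_add (hint j (k - 1) k) (hint (j - 1) k j)]
  exact h1.trans (integral_congr_ae (ae_of_all _ fun t => by ring))

lemma integral_scaledHermite_mul (j k : ℕ) :
    ∫ t, scaledHermite j 1 t * scaledHermite k 1 t ∂(gaussianReal 0 1) =
      if j = k then (k.factorial : ℝ) else 0 := by
  induction j generalizing k with
  | zero =>
    obtain _ | k := k
    · simp [scaledHermite_zero]
    · simp_rw [mul_comm (scaledHermite 0 1 _)]
      rw [integral_scaledHermite_succ_mul]
      simp
  | succ j ih =>
    rw [integral_scaledHermite_succ_mul, ih]
    obtain _ | k := k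
    · simp
    · by_cases h : j = k <;> simp [h, Nat.factorial_succ]

lemma integral_prod_scaledHermite_mul (α β : Fin n →₀ ℕ) :
    ∫ x, (∏ i, scaledHermite (α i) 1 (x i)) * ∏ i, scaledHermite (β i) 1 (x i) ∂(gaussianN n) =
      if α = β then ∏ i, ((β i).factorial : ℝ) else 0 := by
  simp only [← Finset.prod_mul_distrib]
  rw [gaussianN, integral_fintype_prod_eq_prod
    (f := fun i t => scaledHermite (α i) 1 t * scaledHermite (β i) 1 t)]
  simp only [integral_scaledHermite_mul, Finset.prod_ite_zero, Finsupp.ext_iff, Finset.mem_univ,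
    true_imp_iff]

lemma polyGrowth_prod_scaledHermite (α : Fin n →₀ ℕ) :
    PolyGrowth (fun x : Fin n → ℝ => ∏ i, scaledHermite (α i) 1 (x i)) :=
  .prod _ fun i _ => polyGrowth_scaledHermite _ (.const 1) (.coord i)

lemma integral_hermiteSum_mul (c : MvPolynomial (Fin n) ℝ) (s : ℝ) (α : Fin n →₀ ℕ) :
    ∫ x, hermiteSum n c s x * ∏ i, scaledHermite (α i) 1 (x i) ∂(gaussianN n) =
      s ^ (∑ i, α i) * coeff α c * ∏ i, ((α i).factorial : ℝ) := by
  induction c using MvPolynomial.induction_on' with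
  | monomial β a =>
    have h : ∀ x, hermiteSum n (monomial β a) s x * ∏ i, scaledHermite (α i) 1 (x i) =
        (a * s ^ (∑ i, β i)) * ((∏ i, scaledHermite (β i) 1 (x i)) *
          ∏ i, scaledHermite (α i) 1 (x i)) := fun x => by
      rw [hermiteSum_monomial]
      simp_rw [scaledHermite_eq_pow_mul _ s]
      rw [Finset.prod_mul_distrib, Finset.prod_pow_eq_pow_sum]
      ring
    simp only [h]
    rw [integral_const_mul, integral_prod_scaledHermite_mul, coeff_monomial]
    split_ifs with hab
    · rw [hab]; ring
    · ring
  | add p q hp hq =>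
    have hint := fun c => ((polyGrowth_hermiteSum c s).mul
      (polyGrowth_prod_scaledHermite α)).integrable
    simp only [map_add, Pi.add_apply, add_mul, coeff_add]
    rw [integral_add (hint p) (hint q), hp, hq]
    ring

/-- Parseval's identity for the Hermite basis. -/
lemma integral_hermiteSum_sq (c : MvPolynomial (Fin n) ℝ) (s : ℝ) :
    ∫ x, hermiteSum n c s x ^ 2 ∂(gaussianN n) =
      ∑ α ∈ c.support, s ^ (2 * ∑ i, α i) * coeff α c ^ 2 * ∏ i, ((α i).factorial : ℝ) := by
  have h : ∀ x, hermiteSum n c s x ^ 2 = ∑ α ∈ c.support, (coeff α c * s ^ (∑ i, α i)) *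
      (hermiteSum n c s x * ∏ i, scaledHermite (α i) 1 (x i)) := fun x => by
    nth_rw 1 [sq, hermiteSum_eq_sum c s x, Finset.sum_mul]
    refine Finset.sum_congr rfl fun α _ => ?_
    simp_rw [scaledHermite_eq_pow_mul _ s]
    rw [Finset.prod_mul_distrib, Finset.prod_pow_eq_pow_sum]
    ring
  simp only [h]
  rw [integral_finsetSum _ fun α _ => (((polyGrowth_hermiteSum c s).mul
    (polyGrowth_prod_scaledHermite α)).integrable.const_mul _)]
  refine Finset.sum_congr rfl fun α _ => ?_
  rw [integral_const_mul, integral_hermiteSum_mul]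
  ring

lemma integral_hermiteSum (c : MvPolynomial (Fin n) ℝ) (s : ℝ) :
    ∫ x, hermiteSum n c s x ∂(gaussianN n) = coeff 0 c := by
  simpa [scaledHermite_zero] using integral_hermiteSum_mul c s 0

lemma hermiteCoeff_eq {g c : MvPolynomial (Fin n) ℝ} (hc : ∀ x, hermiteSum n c 1 x = eval x g)
    (α : Fin n →₀ ℕ) :
    hermiteCoeff g α = coeff α c * √(∏ i, ((α i).factorial : ℝ)) := by
  have h : ∀ x, eval x g * hermiteMv α x = (√(∏ i, ((α i).factorial : ℝ)))⁻¹ *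
      (hermiteSum n c 1 x * ∏ i, scaledHermite (α i) 1 (x i)) := fun x => by
    simp only [hermiteMv, hermiteFn, hc, scaledHermite, one_pow, one_mul, Finset.prod_div_distrib]
    rw [Real.sqrt_prod _ fun i _ => by positivity]
    ring
  simp only [hermiteCoeff, hermiteCoeffF, h]
  rw [integral_const_mul, integral_hermiteSum_mul]
  have h0 : 0 < ∏ i, ((α i).factorial : ℝ) := Finset.prod_pos fun i _ => by positivity
  have h1 := Real.sqrt_pos.2 h0
  field_simp
  rw [Real.sq_sqrt h0.le]
  ring

/-- `HyperVar_R` as the Gaussian variance of the rescaled Hermite expansion. -/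
lemma hyperVar_eq_integral {g c : MvPolynomial (Fin n) ℝ}
    (hc : ∀ x, hermiteSum n c 1 x = eval x g) (R : ℝ) :
    hyperVar R g = ∫ x, hermiteSum n (c - C (coeff 0 c)) R x ^ 2 ∂(gaussianN n) := by
  have hterm : ∀ α : Fin n →₀ ℕ, (if 1 ≤ ∑ i, α i then
      R ^ (2 * ∑ i, α i) * hermiteCoeff g α ^ 2 else 0) = R ^ (2 * ∑ i, α i) *
      coeff α (c - C (coeff 0 c)) ^ 2 * ∏ i, ((α i).factorial : ℝ) := fun α => by
    rw [hermiteCoeff_eq hc, coeff_sub, coeff_C]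
    obtain rfl | hα := eq_or_ne α 0
    · simp
    · have h : 1 ≤ ∑ i, α i := by
        rw [Nat.one_le_iff_ne_zero, ← Finsupp.degree_eq_sum]
        rwa [Ne, Finsupp.degree_eq_zero_iff]
      rw [if_pos h, if_neg hα.symm, mul_pow, Real.sq_sqrt (by positivity)]
      ring
  rw [hyperVar, hyperVarGE, integral_hermiteSum_sq, ← Finsupp.equivFunOnFinite.tsum_eq]
  refine (tsum_congr hterm).trans (tsum_eq_sum fun α hα => ?_)
  rw [notMem_support_iff.1 hα]
  simp

lemma norm2sq_eq {g c : MvPolynomial (Fin n) ℝ} (hc : ∀ x, hermiteSum n c 1 x = eval x g) :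
    norm2sq g = coeff 0 c ^ 2 +
      ∫ x, hermiteSum n (c - C (coeff 0 c)) 1 x ^ 2 ∂(gaussianN n) := by
  have hpg := polyGrowth_hermiteSum (c - C (coeff 0 c)) 1
  have h : ∀ x, eval x g ^ 2 = coeff 0 c ^ 2 +
      (2 * coeff 0 c * hermiteSum n (c - C (coeff 0 c)) 1 x +
        hermiteSum n (c - C (coeff 0 c)) 1 x ^ 2) := fun x => by
    rw [← hc, map_sub, Pi.sub_apply, Pi.sub_apply, hermiteSum_C]
    ring
  have hint : Integrable (fun x => 2 * coeff 0 c * hermiteSum n (c - C (coeff 0 c)) 1 x +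
      hermiteSum n (c - C (coeff 0 c)) 1 x ^ 2) (gaussianN n) :=
    (hpg.integrable.const_mul _).add (hpg.pow 2).integrable
  simp only [norm2sq, h]
  rw [integral_add (integrable_const _) hint,
    integral_add (hpg.integrable.const_mul _) (hpg.pow 2).integrable, integral_const_mul,
    integral_hermiteSum]
  simp

end Parseval

lemma mulClose_of_abs_sub_lt {γ a b : ℝ} (hγ0 : 0 < γ) (hγ1 : γ ≤ 1) (hb : b ≠ 0)
    (h : |a - b| < 3 / 5 * γ * |b|) : MulClose γ a b := by
  have hexp : Real.exp (-γ) ≤ 1 - 3 / 5 * γ := by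
    rw [Real.exp_neg]
    refine inv_le_of_inv_le₀ (by linarith) ?_
    refine le_trans ?_ (Real.quadratic_le_exp_of_nonneg hγ0.le)
    rw [inv_le_iff_one_le_mul₀ (by linarith)]
    nlinarith [mul_nonneg hγ0.le (sub_nonneg.2 hγ1),
      mul_nonneg (mul_nonneg hγ0.le hγ0.le) (sub_nonneg.2 hγ1)]
  have hexp' : 1 + 3 / 5 * γ ≤ Real.exp γ := by linarith [Real.add_one_le_exp γ]
  have hdiv : |a / b - 1| < 3 / 5 * γ := by
    rw [div_sub_one hb, abs_div, div_lt_iff₀ (abs_pos.2 hb)]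
    exact h
  obtain ⟨h1, h2⟩ := abs_lt.1 hdiv
  refine .inr ⟨?_, by linarith, by linarith⟩
  have hpos : 0 < a / b := by linarith
  have : a * b = a / b * b ^ 2 := by field_simp
  rw [this]
  positivity

/-- Attenuated polynomials take values multiplicatively close to their means: if `g`
is `(R,θ)`-attenuated with `R ≥ √2` and `0 ≤ θ ≤ 1`, `μ = E_{x ∼ N(0,1)^n}[g(x)]`,
and `0 < γ ≤ 1`, then the probability over `x ∼ N(0,1)^n` that `g(x) ≈_γ μ` fails is
at most `(2√θ/γ)^{R²/2 + 1}`. -/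
theorem attenuated_multiplicatively_close (n : ℕ) (g : MvPolynomial (Fin n) ℝ)
    (R θ : ℝ) (hR : Real.sqrt 2 ≤ R) (hθ0 : 0 ≤ θ) (hθ1 : θ ≤ 1)
    (hatt : hyperVar R g ≤ θ * norm2sq g)
    (γ : ℝ) (hγ0 : 0 < γ) (hγ1 : γ ≤ 1) :
    gaussianN n {x | ¬ MulClose γ (eval x g) (∫ y, eval y g ∂(gaussianN n))} ≤
      ENNReal.ofReal ((2 * Real.sqrt θ / γ) ^ (R ^ 2 / 2 + 1)) := by
  have hR2 : 2 ≤ R ^ 2 := by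
    have := pow_le_pow_left₀ (Real.sqrt_nonneg 2) hR 2
    rwa [Real.sq_sqrt (by norm_num)] at this
  have hRpos : 0 ≤ R := (Real.sqrt_nonneg 2).trans hR
  set r := 2 * √θ / γ with hr
  have hr0 : 0 ≤ r := by positivity
  rcases le_or_gt 1 r with h1r | hr1
  · exact prob_le_one.trans (by simpa using Real.one_le_rpow h1r (by positivity))
  have hθ : θ ≤ 1 / 4 := by
    rw [hr, div_lt_one hγ0] at hr1
    nlinarith [Real.sq_sqrt hθ0, Real.sqrt_nonneg θ]
  obtain ⟨c, hc⟩ := exists_hermiteSum_eq_eval g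
  have hμ : ∫ y, eval y g ∂(gaussianN n) = coeff 0 c := by
    simp only [← hc, integral_hermiteSum]
  rw [hμ]
  set m := coeff 0 c with hm
  set f := hermiteSum n (c - C m) with hf
  have hfg : ∀ x, f 1 x = eval x g - m := fun x => by
    rw [hf, map_sub, Pi.sub_apply, Pi.sub_apply, hermiteSum_C, hc]
  have hV : hyperVar R g = ∫ x, f R x ^ 2 ∂(gaussianN n) := hyperVar_eq_integral hc R
  have hN : norm2sq g = m ^ 2 + ∫ x, f 1 x ^ 2 ∂(gaussianN n) := norm2sq_eq hc
  have hv : ∫ x, f 1 x ^ 2 ∂(gaussianN n) ≤ hyperVar R g := by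
    rw [hV]
    refine integral_hermiteSum_sq_mono _ zero_le_one ?_
    nlinarith
  have hv0 : 0 ≤ ∫ x, f 1 x ^ 2 ∂(gaussianN n) := integral_nonneg fun x => sq_nonneg _
  have hNle : norm2sq g ≤ 4 / 3 * m ^ 2 := by
    have : θ * norm2sq g ≤ 1 / 4 * norm2sq g :=
      mul_le_mul_of_nonneg_right hθ (by rw [hN]; positivity)
    linarith
  obtain hm0 | hm0 := eq_or_ne m 0
  · have hzero : ∫ x, f 1 x ^ 2 ∂(gaussianN n) = 0 := by
      refine le_antisymm ?_ hv0
      have : m ^ 2 = 0 := by simp [hm0]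
      linarith
    rw [integral_eq_zero_iff_of_nonneg (fun x => sq_nonneg _)
      ((polyGrowth_hermiteSum _ 1).pow 2).integrable] at hzero
    refine le_of_eq_of_le (ae_iff.1 ?_) zero_le
    filter_upwards [hzero] with x hx
    have : f 1 x = 0 := pow_eq_zero_iff two_ne_zero |>.1 hx
    rw [hfg, hm0, sub_zero] at this
    exact .inl ⟨this, hm0⟩
  obtain ⟨k, hk1, hk2⟩ : ∃ k : ℕ, R ^ 2 / 2 + 1 ≤ (k : ℝ) + 2 ∧ (k : ℝ) + 1 ≤ R ^ 2 := by
    have h1 := Nat.le_ceil (R ^ 2 / 2 - 1)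
    have h2 := Nat.ceil_lt_add_one (show 0 ≤ R ^ 2 / 2 - 1 by linarith)
    exact ⟨⌈R ^ 2 / 2 - 1⌉₊, by linarith, by linarith⟩
  have hkpos : (0 : ℝ) < k + 2 := by positivity
  set τ := 3 / 5 * γ * |m| with hτ
  have hτ0 : 0 < τ := by positivity
  have hE : ∫ x, |f 1 x| ^ (k + 2) ∂(gaussianN n) ≤ (r * τ) ^ (k + 2) := by
    have h1 := integral_abs_hermiteSum_rpow_le k (c - C m) zero_le_one
    have h2 : ∫ x, f (√(k + 1) * 1) x ^ 2 ∂(gaussianN n) ≤ hyperVar R g := by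
      rw [hV]
      refine integral_hermiteSum_sq_mono _ (by positivity) ?_
      rw [mul_one]
      exact Real.sqrt_le_iff.2 ⟨hRpos, hk2⟩
    have h3 : hyperVar R g ≤ (r * τ) ^ 2 := by
      have h4 : r * τ = 6 / 5 * √θ * |m| := by
        rw [hr, hτ]
        field_simp
        ring
      rw [h4, mul_pow, mul_pow, Real.sq_sqrt hθ0, sq_abs]
      nlinarith [mul_le_mul_of_nonneg_left hNle hθ0, mul_nonneg hθ0 (sq_nonneg m)]
    have h5 : ((r * τ) ^ (k + 2)) ^ ((2 : ℝ) / (k + 2)) = (r * τ) ^ 2 := by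
      rw [← Real.rpow_natCast, ← Real.rpow_mul (by positivity), ← Real.rpow_natCast]
      congr 1
      push_cast
      field_simp
    rw [← Real.rpow_le_rpow_iff (integral_nonneg fun x => by positivity) (by positivity)
      (show 0 < (2 : ℝ) / (k + 2) by positivity), h5]
    exact h1.trans (h2.trans h3)
  have hmarkov := mul_meas_ge_le_integral_of_nonneg (μ := gaussianN n)
    (f := fun x => |f 1 x| ^ (k + 2)) (ae_of_all _ fun x => by positivity)
    ((polyGrowth_hermiteSum _ 1).abs.pow _).integrable (τ ^ (k + 2))
  have hprob : (gaussianN n).real {x | τ ^ (k + 2) ≤ |f 1 x| ^ (k + 2)} ≤ r ^ (k + 2) := by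
    refine le_of_mul_le_mul_left ?_ (pow_pos hτ0 (k + 2))
    rw [← mul_pow, mul_comm τ]
    exact hmarkov.trans hE
  have hsub : {x | ¬ MulClose γ (eval x g) m} ⊆ {x | τ ^ (k + 2) ≤ |f 1 x| ^ (k + 2)} := by
    intro x hx
    have : τ ≤ |f 1 x| := by
      rw [hfg]
      by_contra! hlt
      exact hx (mulClose_of_abs_sub_lt hγ0 hγ1 hm0 hlt)
    exact pow_le_pow_left₀ hτ0.le this _
  refine (measure_mono hsub).trans ?_
  rw [← ofReal_measureReal]
  refine ENNReal.ofReal_le_ofReal (hprob.trans ?_)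
  rw [← Real.rpow_natCast]
  push_cast
  exact Real.rpow_le_rpow_of_exponent_ge' hr0 hr1.le (by positivity) hk1
end

section
/- Let q : ℝ^n → ℝ be a polynomial and let k ∈ ℕ with k ≥ 1. Then W^{≥k}[q²] ≤ 4·‖U_{√3}(q^{≥k/2})‖₂²·‖U_{√3} q‖₂², where q^{≥k/2} = Σ_{|α| ≥ k/2} q̂(α)·h_α (the sum over multi-indices α with |α| ≥ k/2). -/
open MeasureTheory ProbabilityTheory MvPolynomial

/-- Hermite weight at levels `≥ k`: `W^{≥k}[g] = Σ_{|α| ≥ k} ĝ(α)²`. -/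
noncomputable def weightGE {n : ℕ} (k : ℕ) (g : MvPolynomial (Fin n) ℝ) : ℝ :=
  ∑' α : Fin n → ℕ, if k ≤ ∑ i, α i then hermiteCoeff g α ^ 2 else 0

/-- The Gaussian noise operator `U_ρ f = Σ_α ρ^{|α|}·f̂(α)·h_α`, applied to a function. -/
noncomputable def noiseOpF {n : ℕ} (ρ : ℝ) (f : (Fin n → ℝ) → ℝ) (x : Fin n → ℝ) : ℝ :=
  ∑' α : Fin n → ℕ, ρ ^ (∑ i, α i) * hermiteCoeffF f α * hermiteMv α x

/-- `‖f‖₂² = E_{x ∼ N(0,1)^n}[f(x)²]` for a function on Gaussian space. -/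
noncomputable def l2sqF {n : ℕ} (f : (Fin n → ℝ) → ℝ) : ℝ :=
  ∫ x, f x ^ 2 ∂(gaussianN n)

/-- The Hermite part `q^{≥ k/2} = Σ_{|α| ≥ k/2} q̂(α)·h_α` of a polynomial `q`
(the condition `|α| ≥ k/2` is encoded as `k ≤ 2|α|`). -/
noncomputable def highPartHalf {n : ℕ} (k : ℕ) (q : MvPolynomial (Fin n) ℝ) :
    (Fin n → ℝ) → ℝ :=
  fun x => ∑' α : Fin n → ℕ,
    if k ≤ 2 * ∑ i, α i then hermiteCoeff q α * hermiteMv α x else 0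

section OneDim

open scoped Polynomial

/-- The probabilists' Hermite polynomial with real coefficients. -/
noncomputable def hermiteReal (k : ℕ) : ℝ[X] :=
  (Polynomial.hermite k).map (Int.castRingHom ℝ)

theorem hermiteReal_zero : hermiteReal 0 = 1 := by simp [hermiteReal]

theorem hermiteReal_succ (k : ℕ) :
    hermiteReal (k + 1) = Polynomial.X * hermiteReal k - Polynomial.derivative (hermiteReal k) := by
  simp [hermiteReal, Polynomial.hermite_succ, Polynomial.derivative_map]

theorem derivative_hermiteReal_succ (k : ℕ) :
    Polynomial.derivative (hermiteReal (k + 1)) = ((k + 1 : ℕ) : ℝ) • hermiteReal k := by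
  induction k with
  | zero => simp [hermiteReal_succ, hermiteReal_zero]
  | succ k ih =>
    rw [hermiteReal_succ (k + 1)]
    simp only [Polynomial.derivative_sub, Polynomial.derivative_mul, Polynomial.derivative_X, ih, Polynomial.derivative_smul]
    rw [hermiteReal_succ k]
    simp only [Polynomial.smul_eq_C_mul]
    push_cast
    simp only [map_add, map_one]
    ring

theorem iterate_derivative_hermiteReal (k m : ℕ) :
    Polynomial.derivative^[m] (hermiteReal k) = (k.descFactorial m : ℝ) • hermiteReal (k - m) := by
  induction m with
  | zero => simp
  | succ m ih =>
    rw [Function.iterate_succ_apply', ih, Polynomial.derivative_smul]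
    rcases Nat.lt_or_ge m k with h | h
    · obtain ⟨d, rfl⟩ := Nat.exists_eq_add_of_lt h
      have e1 : m + d + 1 - m = d + 1 := by omega
      have e2 : m + d + 1 - (m + 1) = d := by omega
      rw [e1, e2, derivative_hermiteReal_succ, Nat.descFactorial_succ, e1, smul_smul]
      push_cast
      ring_nf
    · have e1 : k - m = 0 := by omega
      rw [Nat.descFactorial_succ, e1]
      simp [hermiteReal_zero]

theorem integrable_polynomial_gaussianReal (p : ℝ[X]) :
    Integrable (fun x => p.eval x) (gaussianReal 0 1) := by
  induction p using Polynomial.induction_on' with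
  | add p q hp hq => simpa only [Polynomial.eval_add] using hp.fun_add hq
  | monomial m a =>
    simp only [Polynomial.eval_monomial]
    refine Integrable.const_mul ?_ a
    rcases Nat.eq_zero_or_pos m with rfl | hm
    · simp
    · have h := (memLp_id_gaussianReal (μ := 0) (v := 1) m).integrable_norm_pow hm.ne'
      refine Integrable.mono' h (by fun_prop) (ae_of_all _ fun x => ?_)
      simp

/-- Expectation of a polynomial under the standard Gaussian measure on `ℝ`. -/
noncomputable def gaussianExp (p : ℝ[X]) : ℝ := ∫ x, p.eval x ∂(gaussianReal 0 1)

theorem gaussianExp_add (p q : ℝ[X]) : gaussianExp (p + q) = gaussianExp p + gaussianExp q := by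
  simp only [gaussianExp, Polynomial.eval_add]
  exact integral_add (integrable_polynomial_gaussianReal p) (integrable_polynomial_gaussianReal q)

theorem gaussianExp_smul (c : ℝ) (p : ℝ[X]) : gaussianExp (c • p) = c * gaussianExp p := by
  simp only [gaussianExp, Polynomial.eval_smul, smul_eq_mul, integral_const_mul]

theorem gaussianExp_sub (p q : ℝ[X]) : gaussianExp (p - q) = gaussianExp p - gaussianExp q := by
  simp only [gaussianExp, Polynomial.eval_sub]
  exact integral_sub (integrable_polynomial_gaussianReal p) (integrable_polynomial_gaussianReal q)

theorem gaussianExp_sum {ι : Type*} (s : Finset ι) (p : ι → ℝ[X]) :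
    gaussianExp (∑ i ∈ s, p i) = ∑ i ∈ s, gaussianExp (p i) := by
  simp only [gaussianExp, Polynomial.eval_finsetSum]
  exact integral_finsetSum _ fun i _ => integrable_polynomial_gaussianReal (p i)

theorem gaussianExp_one : gaussianExp 1 = 1 := by simp [gaussianExp]

/-- Gaussian integration by parts for polynomials. -/
theorem gaussianExp_X_mul (p : ℝ[X]) : gaussianExp (Polynomial.X * p) = gaussianExp (Polynomial.derivative p) := by
  rw [← sub_eq_zero, ← neg_eq_zero, neg_sub, ← gaussianExp_sub, gaussianExp,
    integral_gaussianReal_eq_integral_smul one_ne_zero]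
  have hint : ∀ r : ℝ[X], Integrable fun x => gaussianPDFReal 0 1 x * r.eval x := by
    intro r
    have h := integrable_polynomial_gaussianReal r
    rw [gaussianReal_of_var_ne_zero _ one_ne_zero,
      integrable_withDensity_iff_integrable_smul' (measurable_gaussianPDF 0 1)
        (ae_of_all _ fun x => gaussianPDF_lt_top)] at h
    simpa [toReal_gaussianPDF] using h
  have hderiv : ∀ x : ℝ, HasDerivAt (fun x => gaussianPDFReal 0 1 x * p.eval x)
      (gaussianPDFReal 0 1 x • (Polynomial.derivative p - Polynomial.X * p).eval x) x := by
    intro x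
    have h1 : HasDerivAt (gaussianPDFReal 0 1) (gaussianPDFReal 0 1 x * (-x)) x := by
      rw [gaussianPDFReal_def]
      have h0 : HasDerivAt (fun x : ℝ => -(x - 0) ^ 2 / (2 * ((1 : NNReal) : ℝ))) (-x) x := by
        refine ((((hasDerivAt_id x).sub_const 0).pow 2).neg.div_const
          (2 * ((1 : NNReal) : ℝ))).congr_deriv ?_
        simp
        ring
      refine (h0.exp.const_mul (√(2 * Real.pi * ((1 : NNReal) : ℝ)))⁻¹).congr_deriv ?_
      ring
    refine (h1.mul (p.hasDerivAt x)).congr_deriv ?_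
    simp only [Polynomial.eval_sub, Polynomial.eval_mul, Polynomial.eval_X, smul_eq_mul]
    ring
  exact integral_eq_zero_of_hasDerivAt_of_integrable hderiv (hint _) (hint p)

theorem gaussianExp_hermiteReal_mul (k : ℕ) (p : ℝ[X]) :
    gaussianExp (hermiteReal k * p) = gaussianExp (Polynomial.derivative^[k] p) := by
  induction k generalizing p with
  | zero => simp [hermiteReal_zero]
  | succ k ih =>
    rw [Function.iterate_succ_apply, ← ih, hermiteReal_succ, sub_mul, gaussianExp_sub, mul_assoc,
      gaussianExp_X_mul, Polynomial.derivative_mul, gaussianExp_add]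
    ring

theorem gaussianExp_hermiteReal (k : ℕ) :
    gaussianExp (hermiteReal k) = if k = 0 then 1 else 0 := by
  have h := gaussianExp_hermiteReal_mul k 1
  rw [mul_one] at h
  rw [h]
  cases k with
  | zero => simp [gaussianExp_one]
  | succ k => simp [gaussianExp]

theorem gaussianExp_hermiteReal_mul_hermiteReal (i j : ℕ) :
    gaussianExp (hermiteReal i * hermiteReal j) = if i = j then (i.factorial : ℝ) else 0 := by
  rw [gaussianExp_hermiteReal_mul, iterate_derivative_hermiteReal, gaussianExp_smul,
    gaussianExp_hermiteReal]
  split_ifs with h1 h2 h2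
  · subst h2; simp [Nat.descFactorial_self]
  · rw [Nat.descFactorial_eq_zero_iff_lt.2 (by omega)]; simp
  · omega
  · simp

theorem gaussianExp_triple (i j k : ℕ) :
    gaussianExp (hermiteReal k * (hermiteReal i * hermiteReal j)) =
      ∑ p ∈ Finset.HasAntidiagonal.antidiagonal k, ((p.1 + p.2).choose p.1 * i.descFactorial p.1 *
        j.descFactorial p.2 * (if i - p.1 = j - p.2 then ((i - p.1).factorial : ℝ) else 0)) := by
  rw [gaussianExp_hermiteReal_mul, Polynomial.iterate_derivative_mul, gaussianExp_sum,
    Finset.Nat.sum_antidiagonal_eq_sum_range_succ_mk, ← Finset.sum_range_reflect]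
  refine Finset.sum_congr rfl fun a ha => ?_
  have ha : a ≤ k := by simpa [Nat.lt_succ_iff] using ha
  have e : k.succ - 1 - a = k - a := by omega
  have e2 : k - (k - a) = a := by omega
  have e3 : a + (k - a) = k := by omega
  rw [e, e2, iterate_derivative_hermiteReal, iterate_derivative_hermiteReal,
    ← Nat.cast_smul_eq_nsmul ℝ, smul_mul_smul_comm, gaussianExp_smul, gaussianExp_smul,
    gaussianExp_hermiteReal_mul_hermiteReal, Nat.choose_symm ha, e3]
  ring

theorem triple_term_eq_sum {N i j : ℕ} (hi : i < N) (s t : ℕ) :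
    ((s + t).choose s * i.descFactorial s *
        j.descFactorial t * (if i - s = j - t then ((i - s).factorial : ℝ) else 0)) =
      ∑ r ∈ Finset.range N, if i = s + r ∧ j = t + r then
        ((s + t).choose s * (s + r).factorial * (t + r).factorial / r.factorial : ℝ) else 0 := by
  by_cases h : s ≤ i ∧ t ≤ j ∧ i - s = j - t
  · obtain ⟨h1, h2, h3⟩ := h
    obtain ⟨r, rfl⟩ := Nat.exists_eq_add_of_le h1
    have h4 : j = t + r := by omega
    subst h4
    rw [Finset.sum_eq_single r]
    · simp only [Nat.add_sub_cancel_left, if_true, and_self]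
      have f1 := Nat.factorial_mul_descFactorial h1
      have f2 := Nat.factorial_mul_descFactorial h2
      rw [Nat.add_sub_cancel_left] at f1 f2
      rw [← f1, ← f2]
      have : (r.factorial : ℝ) ≠ 0 := by positivity
      push_cast
      field_simp
    · intro b _ hb
      rw [if_neg]
      omega
    · intro hr
      exact absurd (Finset.mem_range.2 (by omega)) hr
  · rw [Finset.sum_eq_zero]
    · by_cases h1 : s ≤ i
      · by_cases h2 : t ≤ j
        · rw [if_neg (fun h3 => h ⟨h1, h2, h3⟩)]; simp
        · rw [Nat.descFactorial_eq_zero_iff_lt.2 (not_le.1 h2)]; simp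
      · rw [Nat.descFactorial_eq_zero_iff_lt.2 (not_le.1 h1)]; simp
    · intro r _
      rw [if_neg]
      omega

theorem gaussianExp_triple_eq_sum {N i j : ℕ} (hi : i < N) (hj : j < N) (k : ℕ) :
    gaussianExp (hermiteReal k * (hermiteReal i * hermiteReal j)) =
      ∑ s ∈ Finset.range N, ∑ t ∈ Finset.range N, ∑ r ∈ Finset.range N,
        if i = s + r ∧ j = t + r ∧ k = s + t then
        ((s + t).choose s * (s + r).factorial * (t + r).factorial / r.factorial : ℝ) else 0 := by
  rw [gaussianExp_triple]
  simp_rw [triple_term_eq_sum hi]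
  rw [← Finset.sum_product' (Finset.range N) (Finset.range N) (fun s t =>
    ∑ r ∈ Finset.range N, if i = s + r ∧ j = t + r ∧ k = s + t then
        ((s + t).choose s * (s + r).factorial * (t + r).factorial / r.factorial : ℝ) else 0)]
  have key : ∀ p : ℕ × ℕ, (∑ r ∈ Finset.range N, if i = p.1 + r ∧ j = p.2 + r ∧ k = p.1 + p.2 then
        ((p.1 + p.2).choose p.1 * (p.1 + r).factorial * (p.2 + r).factorial / r.factorial : ℝ)
          else 0) = if p ∈ Finset.HasAntidiagonal.antidiagonal k then ∑ r ∈ Finset.range N,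
        if i = p.1 + r ∧ j = p.2 + r then
        ((p.1 + p.2).choose p.1 * (p.1 + r).factorial * (p.2 + r).factorial / r.factorial : ℝ)
          else 0 else 0 := by
    intro p
    by_cases h : p.1 + p.2 = k
    · simp [h]
    · simp [h, Ne.symm h]
  simp_rw [key]
  rw [← Finset.sum_filter]
  symm
  refine Finset.sum_subset (fun p hp => (Finset.mem_filter.1 hp).2) fun p hp hp' => ?_
  refine Finset.sum_eq_zero fun r _ => if_neg fun h => hp' ?_
  simp only [Finset.mem_filter, Finset.mem_product, Finset.mem_range]
  exact ⟨by omega, hp⟩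

end OneDim

theorem hermiteFn_eq (k : ℕ) (t : ℝ) :
    hermiteFn k t = (hermiteReal k).eval t / Real.sqrt k.factorial := rfl

theorem integral_hermiteFn_mul (i j : ℕ) :
    ∫ x, hermiteFn i x * hermiteFn j x ∂(gaussianReal 0 1) = if i = j then 1 else 0 := by
  have h : ∀ x, hermiteFn i x * hermiteFn j x = (Real.sqrt i.factorial * Real.sqrt j.factorial)⁻¹ *
      (hermiteReal i * hermiteReal j).eval x := by
    intro x
    simp only [hermiteFn_eq, Polynomial.eval_mul]
    field_simp
  simp_rw [h, integral_const_mul]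
  have h2 := gaussianExp_hermiteReal_mul_hermiteReal i j
  rw [gaussianExp] at h2
  rw [h2]
  split_ifs with hij
  · subst hij
    rw [Real.mul_self_sqrt (by positivity)]
    have : (i.factorial : ℝ) ≠ 0 := by positivity
    field_simp
  · simp

theorem normalized_triple_weight (s t r : ℕ) :
    ((s + t).choose s * (s + r).factorial * (t + r).factorial / r.factorial : ℝ) /
      (Real.sqrt (s + r).factorial * Real.sqrt (t + r).factorial * Real.sqrt (s + t).factorial) =
    Real.sqrt ((s + t).choose s) * Real.sqrt ((s + r).choose s) * Real.sqrt ((t + r).choose t) := by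
  rw [Nat.cast_add_choose, Nat.cast_add_choose, Nat.cast_add_choose]
  have hs : (0 : ℝ) < s.factorial := by positivity
  have ht : (0 : ℝ) < t.factorial := by positivity
  have hr : (0 : ℝ) < r.factorial := by positivity
  have hsr : (0 : ℝ) < (s + r).factorial := by positivity
  have htr : (0 : ℝ) < (t + r).factorial := by positivity
  have hst : (0 : ℝ) < (s + t).factorial := by positivity
  generalize (s.factorial : ℝ) = S at *
  generalize (t.factorial : ℝ) = T at *
  generalize (r.factorial : ℝ) = R at *
  generalize ((s + r).factorial : ℝ) = A at *
  generalize ((t + r).factorial : ℝ) = B at *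
  generalize ((s + t).factorial : ℝ) = D at *
  rw [← Real.sqrt_mul (by positivity), ← Real.sqrt_mul (by positivity),
    ← Real.sqrt_mul (by positivity), ← Real.sqrt_mul (by positivity)]
  rw [eq_comm, Real.sqrt_eq_iff_mul_self_eq (by positivity) (by positivity)]
  have h := Real.mul_self_sqrt (show 0 ≤ A * B * D by positivity)
  rw [div_mul_div_comm (D / (S * T) * A * B / R), h]
  field_simp

theorem integral_hermiteFn_triple {N i j : ℕ} (hi : i < N) (hj : j < N) (k : ℕ) :
    ∫ x, hermiteFn i x * hermiteFn j x * hermiteFn k x ∂(gaussianReal 0 1) =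
      ∑ s ∈ Finset.range N, ∑ t ∈ Finset.range N, ∑ r ∈ Finset.range N,
        if i = s + r ∧ j = t + r ∧ k = s + t then
          Real.sqrt ((s + t).choose s) * Real.sqrt ((s + r).choose s) *
            Real.sqrt ((t + r).choose t) else 0 := by
  have h : ∀ x, hermiteFn i x * hermiteFn j x * hermiteFn k x =
      (Real.sqrt i.factorial * Real.sqrt j.factorial * Real.sqrt k.factorial)⁻¹ *
      (hermiteReal k * (hermiteReal i * hermiteReal j)).eval x := by
    intro x
    simp only [hermiteFn_eq, Polynomial.eval_mul]
    field_simp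
  simp_rw [h, integral_const_mul]
  have h2 := gaussianExp_triple_eq_sum hi hj k
  rw [gaussianExp] at h2
  rw [h2]
  simp_rw [Finset.mul_sum]
  refine Finset.sum_congr rfl fun s _ => Finset.sum_congr rfl fun t _ =>
    Finset.sum_congr rfl fun r _ => ?_
  split_ifs with hc
  · obtain ⟨rfl, rfl, rfl⟩ := hc
    rw [← normalized_triple_weight, div_eq_inv_mul _ (_ * _)]
  · simp

/-- The multi-indices `α : Fin n → ℕ` all of whose entries are less than `N`. -/
def multiBox (n N : ℕ) : Finset (Fin n → ℕ) :=
  Fintype.piFinset fun _ => Finset.range N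

theorem mem_multiBox {n N : ℕ} {α : Fin n → ℕ} : α ∈ multiBox n N ↔ ∀ i, α i < N := by
  simp [multiBox]

/-- The multi-index binomial coefficient `∏ i, (α i).choose (s i)`. -/
noncomputable def multiChoose {n : ℕ} (α s : Fin n → ℕ) : ℝ :=
  ∏ i, ((α i).choose (s i) : ℝ)

theorem multiChoose_nonneg {n : ℕ} (α s : Fin n → ℕ) : 0 ≤ multiChoose α s :=
  Finset.prod_nonneg fun _ _ => Nat.cast_nonneg _

theorem sqrt_multiChoose {n : ℕ} (α s : Fin n → ℕ) :
    Real.sqrt (multiChoose α s) = ∏ i, Real.sqrt ((α i).choose (s i)) := by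
  rw [multiChoose, Real.sqrt_eq_rpow, ← Real.finsetProd_rpow _ _ (fun _ _ => Nat.cast_nonneg _)]
  simp [Real.sqrt_eq_rpow]

theorem integrable_prod_polynomial_gaussianN {n : ℕ} (p : Fin n → Polynomial ℝ) :
    Integrable (fun x : Fin n → ℝ => ∏ i, (p i).eval (x i)) (gaussianN n) := by
  unfold gaussianN
  exact Integrable.fintype_prod (f := fun i t => (p i).eval t)
    fun i => integrable_polynomial_gaussianReal (p i)

theorem hermiteFn_eq_eval (k : ℕ) (t : ℝ) :
    hermiteFn k t = ((Real.sqrt k.factorial)⁻¹ • hermiteReal k).eval t := by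
  rw [hermiteFn_eq, Polynomial.eval_smul, smul_eq_mul, div_eq_inv_mul]

theorem integrable_hermiteMv_triple {n : ℕ} (α β γ : Fin n → ℕ) :
    Integrable (fun x => hermiteMv α x * hermiteMv β x * hermiteMv γ x) (gaussianN n) := by
  simp only [hermiteMv, ← Finset.prod_mul_distrib, hermiteFn_eq_eval, ← Polynomial.eval_mul]
  exact integrable_prod_polynomial_gaussianN _

theorem integrable_hermiteMv_mul {n : ℕ} (α β : Fin n → ℕ) :
    Integrable (fun x => hermiteMv α x * hermiteMv β x) (gaussianN n) := by
  simp only [hermiteMv, ← Finset.prod_mul_distrib, hermiteFn_eq_eval, ← Polynomial.eval_mul]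
  exact integrable_prod_polynomial_gaussianN _

theorem integral_hermiteMv_mul {n : ℕ} (α β : Fin n → ℕ) :
    ∫ x, hermiteMv α x * hermiteMv β x ∂(gaussianN n) = if α = β then 1 else 0 := by
  simp only [hermiteMv, ← Finset.prod_mul_distrib, gaussianN]
  rw [integral_fintype_prod_eq_prod (fun i t => hermiteFn (α i) t * hermiteFn (β i) t)]
  simp only [integral_hermiteFn_mul, Fintype.prod_ite_zero, Finset.prod_const_one, funext_iff]

/-- The structure constants `E[h_α h_β h_γ]` of multiplication in the Hermite basis. -/
noncomputable def hermiteTriple {n : ℕ} (α β γ : Fin n → ℕ) : ℝ :=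
  ∫ x, hermiteMv α x * hermiteMv β x * hermiteMv γ x ∂(gaussianN n)

theorem hermiteTriple_comm {n : ℕ} (α β γ : Fin n → ℕ) :
    hermiteTriple α β γ = hermiteTriple β α γ := by
  simp only [hermiteTriple, mul_comm (hermiteMv α _)]

theorem hermiteTriple_eq_sum {n N : ℕ} {α β : Fin n → ℕ} (hα : α ∈ multiBox n N)
    (hβ : β ∈ multiBox n N) (γ : Fin n → ℕ) :
    hermiteTriple α β γ = ∑ s ∈ multiBox n N, ∑ t ∈ multiBox n N, ∑ r ∈ multiBox n N,
      if α = s + r ∧ β = t + r ∧ γ = s + t then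
        Real.sqrt (multiChoose (s + t) s) * Real.sqrt (multiChoose (s + r) s) *
          Real.sqrt (multiChoose (t + r) t) else 0 := by
  simp only [hermiteTriple, hermiteMv, ← Finset.prod_mul_distrib, gaussianN]
  rw [integral_fintype_prod_eq_prod
    (fun i t => hermiteFn (α i) t * hermiteFn (β i) t * hermiteFn (γ i) t)]
  rw [Finset.prod_congr rfl fun i _ =>
    integral_hermiteFn_triple (mem_multiBox.1 hα i) (mem_multiBox.1 hβ i) (γ i)]
  simp only [Finset.prod_univ_sum, Fintype.prod_ite_zero, sqrt_multiChoose,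
    Finset.prod_mul_distrib, funext_iff, Pi.add_apply, forall_and, multiBox]

/-- The `γ`-th Hermite coefficient of the product of two Hermite expansions over `S`. -/
noncomputable def hermiteMulCoeff {n : ℕ} (S : Finset (Fin n → ℕ)) (a b : (Fin n → ℕ) → ℝ)
    (γ : Fin n → ℕ) : ℝ :=
  ∑ α ∈ S, ∑ β ∈ S, a α * b β * hermiteTriple α β γ

theorem hermiteMulCoeff_comm {n : ℕ} (S : Finset (Fin n → ℕ)) (a b : (Fin n → ℕ) → ℝ)
    (γ : Fin n → ℕ) : hermiteMulCoeff S a b γ = hermiteMulCoeff S b a γ := by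
  unfold hermiteMulCoeff
  rw [Finset.sum_comm]
  refine Finset.sum_congr rfl fun α _ => Finset.sum_congr rfl fun β _ => ?_
  rw [hermiteTriple_comm, mul_comm (a β)]

theorem hermiteMulCoeff_add_left {n : ℕ} (S : Finset (Fin n → ℕ)) (a a' b : (Fin n → ℕ) → ℝ)
    (γ : Fin n → ℕ) :
    hermiteMulCoeff S (a + a') b γ = hermiteMulCoeff S a b γ + hermiteMulCoeff S a' b γ := by
  simp only [hermiteMulCoeff, Pi.add_apply, add_mul, Finset.sum_add_distrib]

theorem hermiteMulCoeff_add_right {n : ℕ} (S : Finset (Fin n → ℕ)) (a b b' : (Fin n → ℕ) → ℝ)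
    (γ : Fin n → ℕ) :
    hermiteMulCoeff S a (b + b') γ = hermiteMulCoeff S a b γ + hermiteMulCoeff S a b' γ := by
  simp only [hermiteMulCoeff, Pi.add_apply, mul_add, add_mul, Finset.sum_add_distrib]

theorem sum_comm_two_three {ι : Type*} (S : Finset ι) (F : ι → ι → ι → ι → ι → ℝ) :
    ∑ α ∈ S, ∑ β ∈ S, ∑ s ∈ S, ∑ t ∈ S, ∑ r ∈ S, F α β s t r =
      ∑ s ∈ S, ∑ t ∈ S, ∑ r ∈ S, ∑ α ∈ S, ∑ β ∈ S, F α β s t r := by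
  have h := Finset.sum_comm (s := S ×ˢ S) (t := S ×ˢ S ×ˢ S)
    (f := fun p u => F p.1 p.2 u.1 u.2.1 u.2.2)
  simpa only [Finset.sum_product] using h

theorem hermiteMulCoeff_eq_sum {n N : ℕ} {a b : (Fin n → ℕ) → ℝ}
    (ha : ∀ α, α ∉ multiBox n N → a α = 0) (hb : ∀ α, α ∉ multiBox n N → b α = 0)
    (γ : Fin n → ℕ) :
    hermiteMulCoeff (multiBox n N) a b γ =
      ∑ s ∈ multiBox n N, ∑ t ∈ multiBox n N, if γ = s + t then
        Real.sqrt (multiChoose (s + t) s) * ∑ r ∈ multiBox n N,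
          (Real.sqrt (multiChoose (s + r) s) * a (s + r)) *
            (Real.sqrt (multiChoose (t + r) t) * b (t + r)) else 0 := by
  have h : hermiteMulCoeff (multiBox n N) a b γ =
      ∑ s ∈ multiBox n N, ∑ t ∈ multiBox n N, ∑ r ∈ multiBox n N,
      ∑ α ∈ multiBox n N, ∑ β ∈ multiBox n N,
        if α = s + r then if β = t + r then (if γ = s + t then a α * b β *
          (Real.sqrt (multiChoose (s + t) s) * Real.sqrt (multiChoose (s + r) s) *
          Real.sqrt (multiChoose (t + r) t)) else 0) else 0 else 0 := by
    unfold hermiteMulCoeff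
    rw [Finset.sum_congr rfl fun α hα => Finset.sum_congr rfl fun β hβ => by
      rw [hermiteTriple_eq_sum hα hβ γ]]
    simp only [Finset.mul_sum, mul_ite, mul_zero, ite_and]
    exact sum_comm_two_three _ _
  rw [h]
  refine Finset.sum_congr rfl fun s _ => Finset.sum_congr rfl fun t _ => ?_
  have hr : ∀ r ∈ multiBox n N, (∑ α ∈ multiBox n N, ∑ β ∈ multiBox n N,
        if α = s + r then if β = t + r then (if γ = s + t then a α * b β *
          (Real.sqrt (multiChoose (s + t) s) * Real.sqrt (multiChoose (s + r) s) *
          Real.sqrt (multiChoose (t + r) t)) else 0) else 0 else 0) =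
        if γ = s + t then Real.sqrt (multiChoose (s + t) s) *
          ((Real.sqrt (multiChoose (s + r) s) * a (s + r)) *
            (Real.sqrt (multiChoose (t + r) t) * b (t + r))) else 0 := by
    intro r _
    rw [Finset.sum_eq_single (s + r), Finset.sum_eq_single (t + r)]
    · simp only [if_true]
      split_ifs
      · ring
      · rfl
    · intro β _ hβ
      simp [hβ]
    · intro hβ
      simp [hb _ hβ]
    · intro α _ hα
      simp [hα]
    · intro hα
      simp [ha _ hα]
  rw [Finset.sum_congr rfl hr]
  split_ifs
  · rw [Finset.mul_sum]
  · simp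

theorem sum_le_sum_of_ne_zero_mem {ι : Type*} {U T : Finset ι} {f : ι → ℝ} (hf : ∀ x, 0 ≤ f x)
    (h : ∀ x ∈ U, f x ≠ 0 → x ∈ T) : ∑ x ∈ U, f x ≤ ∑ x ∈ T, f x := by
  classical
  rw [← Finset.sum_filter_ne_zero]
  refine Finset.sum_le_sum_of_subset_of_nonneg (fun x hx => ?_) fun x _ _ => hf x
  rw [Finset.mem_filter] at hx
  exact h x hx.1 hx.2

theorem sum_multiChoose_mul_pow_le {n : ℕ} (α : Fin n → ℕ) (U : Finset (Fin n → ℕ)) {c : ℝ}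
    (hc : 0 ≤ c) :
    ∑ s ∈ U, multiChoose α s * c ^ (∑ i, s i) ≤ (c + 1) ^ (∑ i, α i) := by
  have h : ∑ s ∈ Fintype.piFinset fun i => Finset.range (α i + 1),
      multiChoose α s * c ^ (∑ i, s i) = (c + 1) ^ (∑ i, α i) := by
    simp only [multiChoose, ← Finset.prod_pow_eq_pow_sum, ← Finset.prod_mul_distrib]
    rw [← Finset.prod_univ_sum (fun i => Finset.range (α i + 1))
      (fun i j => ((α i).choose j : ℝ) * c ^ j)]
    refine Finset.prod_congr rfl fun i _ => ?_
    rw [add_pow]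
    refine Finset.sum_congr rfl fun j _ => ?_
    ring
  rw [← h]
  refine sum_le_sum_of_ne_zero_mem
    (fun s => mul_nonneg (multiChoose_nonneg α s) (by positivity)) fun s _ hs => ?_
  rw [Fintype.mem_piFinset]
  intro i
  have h1 := Finset.prod_ne_zero_iff.1 (left_ne_zero_of_mul hs) i (Finset.mem_univ i)
  rw [Finset.mem_range, Nat.lt_succ_iff]
  by_contra hlt
  exact h1 (by rw [Nat.choose_eq_zero_of_lt (not_le.1 hlt), Nat.cast_zero])

theorem sum_two_pow_mul_sum_multiChoose_le {n N : ℕ} {a : (Fin n → ℕ) → ℝ}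
    (ha : ∀ α, α ∉ multiBox n N → a α = 0) :
    ∑ s ∈ multiBox n N, 2 ^ (∑ i, s i) *
        ∑ r ∈ multiBox n N, multiChoose (s + r) s * a (s + r) ^ 2 ≤
      ∑ α ∈ multiBox n N, 3 ^ (∑ i, α i) * a α ^ 2 := by
  have h1 : ∀ s : Fin n → ℕ, ∑ r ∈ multiBox n N, multiChoose (s + r) s * a (s + r) ^ 2 ≤
      ∑ α ∈ multiBox n N, multiChoose α s * a α ^ 2 := by
    intro s
    have e := Finset.sum_map (multiBox n N) (addLeftEmbedding s)
      (fun α => multiChoose α s * a α ^ 2)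
    simp only [addLeftEmbedding_apply] at e
    rw [← e]
    refine sum_le_sum_of_ne_zero_mem
      (fun α => mul_nonneg (multiChoose_nonneg α s) (sq_nonneg _)) fun α _ hα => ?_
    by_contra hn
    exact hα (by simp [ha α hn])
  calc _ ≤ ∑ s ∈ multiBox n N, 2 ^ (∑ i, s i) *
        ∑ α ∈ multiBox n N, multiChoose α s * a α ^ 2 :=
        Finset.sum_le_sum fun s _ => mul_le_mul_of_nonneg_left (h1 s) (by positivity)
    _ = ∑ α ∈ multiBox n N, (∑ s ∈ multiBox n N, multiChoose α s * 2 ^ (∑ i, s i)) * a α ^ 2 := by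
        simp only [Finset.mul_sum, Finset.sum_mul]
        rw [Finset.sum_comm]
        refine Finset.sum_congr rfl fun α _ => Finset.sum_congr rfl fun s _ => ?_
        ring
    _ ≤ _ := by
        refine Finset.sum_le_sum fun α _ => mul_le_mul_of_nonneg_right ?_ (sq_nonneg _)
        refine (sum_multiChoose_mul_pow_le α _ zero_le_two).trans_eq ?_
        norm_num

theorem sq_sum_sqrt_multiChoose_le {n N : ℕ} (T : (Fin n → ℕ) → (Fin n → ℕ) → ℝ)
    (γ : Fin n → ℕ) :
    (∑ s ∈ multiBox n N, ∑ t ∈ multiBox n N, if γ = s + t then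
        Real.sqrt (multiChoose (s + t) s) * T s t else 0) ^ 2 ≤
      ∑ s ∈ multiBox n N, ∑ t ∈ multiBox n N, if γ = s + t then
        2 ^ (∑ i, (s + t) i) * T s t ^ 2 else 0 := by
  simp_rw [← Finset.sum_product', ← Finset.sum_filter]
  set P := (multiBox n N ×ˢ multiBox n N).filter fun p => γ = p.1 + p.2 with hP
  have hmem : ∀ p ∈ P, γ = p.1 + p.2 := fun p hp => (Finset.mem_filter.1 hp).2
  refine (Finset.sum_mul_sq_le_sq_mul_sq P _ _).trans ?_
  have h1 : ∑ p ∈ P, Real.sqrt (multiChoose (p.1 + p.2) p.1) ^ 2 ≤ 2 ^ (∑ i, γ i) := by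
    have e : ∑ p ∈ P, Real.sqrt (multiChoose (p.1 + p.2) p.1) ^ 2 =
        ∑ s ∈ P.image Prod.fst, multiChoose γ s * 1 ^ (∑ i, s i) := by
      rw [Finset.sum_image]
      · refine Finset.sum_congr rfl fun p hp => ?_
        rw [Real.sq_sqrt (multiChoose_nonneg _ _), ← hmem p hp]
        simp
      · intro p hp p' hp' h
        have h2 := (hmem p hp).symm.trans (hmem p' hp')
        rw [h] at h2
        exact Prod.ext h (add_left_cancel h2)
    rw [e]
    refine (sum_multiChoose_mul_pow_le γ _ zero_le_one).trans_eq ?_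
    norm_num
  refine (mul_le_mul_of_nonneg_right h1 (Finset.sum_nonneg fun _ _ => sq_nonneg _)).trans_eq ?_
  rw [Finset.mul_sum]
  refine Finset.sum_congr rfl fun p hp => ?_
  rw [← hmem p hp]

/-- The Hermite coefficients of a product are controlled in `ℓ²` by those of `U_√3` applied to the
factors. -/
theorem sum_sq_hermiteMulCoeff_le {n N : ℕ} {a b : (Fin n → ℕ) → ℝ}
    (ha : ∀ α, α ∉ multiBox n N → a α = 0) (hb : ∀ α, α ∉ multiBox n N → b α = 0)
    (u : Finset (Fin n → ℕ)) :
    ∑ γ ∈ u, hermiteMulCoeff (multiBox n N) a b γ ^ 2 ≤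
      (∑ α ∈ multiBox n N, 3 ^ (∑ i, α i) * a α ^ 2) *
        ∑ α ∈ multiBox n N, 3 ^ (∑ i, α i) * b α ^ 2 := by
  set B := multiBox n N with hB
  set T : (Fin n → ℕ) → (Fin n → ℕ) → ℝ := fun s t => ∑ r ∈ B,
    (Real.sqrt (multiChoose (s + r) s) * a (s + r)) *
      (Real.sqrt (multiChoose (t + r) t) * b (t + r)) with hT
  have hTsq : ∀ s t, T s t ^ 2 ≤ (∑ r ∈ B, multiChoose (s + r) s * a (s + r) ^ 2) *
      ∑ r ∈ B, multiChoose (t + r) t * b (t + r) ^ 2 := by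
    intro s t
    refine (Finset.sum_mul_sq_le_sq_mul_sq _ _ _).trans_eq ?_
    simp only [mul_pow, Real.sq_sqrt (multiChoose_nonneg _ _)]
  have hnn : ∀ s t : Fin n → ℕ, 0 ≤ (2 : ℝ) ^ (∑ i, (s + t) i) * T s t ^ 2 :=
    fun s t => by positivity
  calc _ ≤ ∑ γ ∈ u, ∑ s ∈ B, ∑ t ∈ B, (if γ = s + t then
        2 ^ (∑ i, (s + t) i) * T s t ^ 2 else 0) := by
        refine Finset.sum_le_sum fun γ _ => ?_
        rw [hermiteMulCoeff_eq_sum ha hb]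
        exact sq_sum_sqrt_multiChoose_le T γ
    _ = ∑ s ∈ B, ∑ t ∈ B, ∑ γ ∈ u, (if γ = s + t then
        2 ^ (∑ i, (s + t) i) * T s t ^ 2 else 0) := by
        rw [Finset.sum_comm]
        exact Finset.sum_congr rfl fun s _ => Finset.sum_comm
    _ ≤ ∑ s ∈ B, ∑ t ∈ B, (2 : ℝ) ^ (∑ i, (s + t) i) * T s t ^ 2 := by
        refine Finset.sum_le_sum fun s _ => Finset.sum_le_sum fun t _ => ?_
        rw [Finset.sum_ite_eq']
        split_ifs
        · exact le_rfl
        · exact hnn s t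
    _ ≤ ∑ s ∈ B, ∑ t ∈ B,
        (2 ^ (∑ i, s i) * ∑ r ∈ B, multiChoose (s + r) s * a (s + r) ^ 2) *
          (2 ^ (∑ i, t i) * ∑ r ∈ B, multiChoose (t + r) t * b (t + r) ^ 2) := by
        refine Finset.sum_le_sum fun s _ => Finset.sum_le_sum fun t _ => ?_
        refine (mul_le_mul_of_nonneg_left (hTsq s t) (by positivity)).trans_eq ?_
        simp only [Pi.add_apply, Finset.sum_add_distrib, pow_add]
        ring
    _ = (∑ s ∈ B, 2 ^ (∑ i, s i) * ∑ r ∈ B, multiChoose (s + r) s * a (s + r) ^ 2) *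
          ∑ t ∈ B, 2 ^ (∑ i, t i) * ∑ r ∈ B, multiChoose (t + r) t * b (t + r) ^ 2 := by
        rw [Finset.sum_mul_sum]
    _ ≤ _ := by
        refine mul_le_mul (sum_two_pow_mul_sum_multiChoose_le ha)
          (sum_two_pow_mul_sum_multiChoose_le hb) ?_ (by positivity)
        exact Finset.sum_nonneg fun s _ => mul_nonneg (by positivity)
          (Finset.sum_nonneg fun r _ => mul_nonneg (multiChoose_nonneg _ _) (sq_nonneg _))

theorem hermiteMulCoeff_eq_zero_of_low {n N k : ℕ} {a : (Fin n → ℕ) → ℝ}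
    (ha : ∀ α, α ∉ multiBox n N → a α = 0) (hlow : ∀ α, k ≤ 2 * ∑ i, α i → a α = 0)
    {γ : Fin n → ℕ} (hγ : k ≤ ∑ i, γ i) : hermiteMulCoeff (multiBox n N) a a γ = 0 := by
  rw [hermiteMulCoeff_eq_sum ha ha]
  refine Finset.sum_eq_zero fun s _ => Finset.sum_eq_zero fun t _ => ?_
  split_ifs with h
  · rw [Finset.sum_eq_zero, mul_zero]
    intro r _
    subst h
    simp only [Pi.add_apply, Finset.sum_add_distrib] at hγ
    rcases le_total (∑ i, s i) (∑ i, t i) with hst | hst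
    · rw [hlow (t + r)]
      · simp
      · simp only [Pi.add_apply, Finset.sum_add_distrib]; omega
    · rw [hlow (s + r)]
      · simp
      · simp only [Pi.add_apply, Finset.sum_add_distrib]; omega
  · rfl

theorem sum_sq_high_hermiteMulCoeff_le {n N k : ℕ} {c : (Fin n → ℕ) → ℝ}
    (hc : ∀ α, α ∉ multiBox n N → c α = 0) (u : Finset (Fin n → ℕ)) :
    ∑ γ ∈ u, (if k ≤ ∑ i, γ i then hermiteMulCoeff (multiBox n N) c c γ ^ 2 else 0) ≤
      4 * (∑ α ∈ multiBox n N, 3 ^ (∑ i, α i) * (if k ≤ 2 * ∑ i, α i then c α else 0) ^ 2) *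
        ∑ α ∈ multiBox n N, 3 ^ (∑ i, α i) * c α ^ 2 := by
  set a : (Fin n → ℕ) → ℝ := fun α => if k ≤ 2 * ∑ i, α i then 0 else c α with ha
  set b : (Fin n → ℕ) → ℝ := fun α => if k ≤ 2 * ∑ i, α i then c α else 0 with hb
  have hab : a + b = c := by
    funext α
    simp only [ha, hb, Pi.add_apply]
    split_ifs <;> simp
  have ha0 : ∀ α, α ∉ multiBox n N → a α = 0 := fun α hα => by simp [ha, hc α hα]
  have hb0 : ∀ α, α ∉ multiBox n N → b α = 0 := fun α hα => by simp [hb, hc α hα]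
  have hd0 : ∀ α, α ∉ multiBox n N → (c + a) α = 0 := fun α hα => by
    simp [ha0 α hα, hc α hα]
  have hlow : ∀ α, k ≤ 2 * ∑ i, α i → a α = 0 := fun α hα => by simp [ha, hα]
  have h1 : ∀ γ : Fin n → ℕ, k ≤ ∑ i, γ i → hermiteMulCoeff (multiBox n N) c c γ =
      hermiteMulCoeff (multiBox n N) b (c + a) γ := by
    intro γ hγ
    have h0 := hermiteMulCoeff_eq_zero_of_low ha0 hlow hγ
    have h2 : hermiteMulCoeff (multiBox n N) c c γ = hermiteMulCoeff (multiBox n N) (a + b) c γ := by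
      rw [hab]
    have h3 : hermiteMulCoeff (multiBox n N) a c γ = hermiteMulCoeff (multiBox n N) a (a + b) γ := by
      rw [hab]
    rw [h2, hermiteMulCoeff_add_left, h3, hermiteMulCoeff_add_right, hermiteMulCoeff_add_right, h0,
      hermiteMulCoeff_comm _ a b]
    ring
  calc _ ≤ ∑ γ ∈ u, hermiteMulCoeff (multiBox n N) b (c + a) γ ^ 2 := by
        refine Finset.sum_le_sum fun γ _ => ?_
        split_ifs with h
        · rw [h1 γ h]
        · exact sq_nonneg _
    _ ≤ _ := sum_sq_hermiteMulCoeff_le hb0 hd0 u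
    _ ≤ (∑ α ∈ multiBox n N, 3 ^ (∑ i, α i) * b α ^ 2) *
          (4 * ∑ α ∈ multiBox n N, 3 ^ (∑ i, α i) * c α ^ 2) := by
        refine mul_le_mul_of_nonneg_left ?_ (by positivity)
        rw [Finset.mul_sum]
        refine Finset.sum_le_sum fun α _ => ?_
        rw [mul_left_comm]
        refine mul_le_mul_of_nonneg_left ?_ (by positivity)
        simp only [ha, Pi.add_apply]
        split_ifs <;> nlinarith [sq_nonneg (c α)]
    _ = _ := by ring

theorem hermiteCoeffF_sum {n : ℕ} (S : Finset (Fin n → ℕ)) {c : (Fin n → ℕ) → ℝ}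
    (hc : ∀ α, α ∉ S → c α = 0) :
    hermiteCoeffF (fun x => ∑ α ∈ S, c α * hermiteMv α x) = c := by
  funext β
  simp only [hermiteCoeffF, Finset.sum_mul, mul_assoc]
  rw [integral_finsetSum _ fun α _ => (integrable_hermiteMv_mul α β).const_mul (c α)]
  simp only [integral_const_mul, integral_hermiteMv_mul, mul_ite, mul_one, mul_zero,
    Finset.sum_ite_eq']
  split_ifs with h
  · rfl
  · exact (hc β h).symm

theorem l2sqF_sum {n : ℕ} (S : Finset (Fin n → ℕ)) (c : (Fin n → ℕ) → ℝ) :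
    l2sqF (fun x => ∑ α ∈ S, c α * hermiteMv α x) = ∑ α ∈ S, c α ^ 2 := by
  have h : ∀ x, (∑ α ∈ S, c α * hermiteMv α x) ^ 2 =
      ∑ α ∈ S, ∑ β ∈ S, c α * c β * (hermiteMv α x * hermiteMv β x) := by
    intro x
    rw [sq, Finset.sum_mul_sum]
    refine Finset.sum_congr rfl fun α _ => Finset.sum_congr rfl fun β _ => ?_
    ring
  simp only [l2sqF, h]
  have hi : ∀ α β : Fin n → ℕ, Integrable
      (fun x => c α * c β * (hermiteMv α x * hermiteMv β x)) (gaussianN n) :=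
    fun α β => (integrable_hermiteMv_mul α β).const_mul _
  rw [integral_finsetSum _ fun α _ => integrable_finsetSum _ fun β _ => hi α β]
  refine Finset.sum_congr rfl fun α hα => ?_
  rw [integral_finsetSum _ fun β _ => hi α β]
  simp only [integral_const_mul, integral_hermiteMv_mul, mul_ite, mul_one, mul_zero,
    Finset.sum_ite_eq, if_pos hα, sq]

theorem noiseOpF_sum {n : ℕ} (ρ : ℝ) (S : Finset (Fin n → ℕ)) {c : (Fin n → ℕ) → ℝ}
    (hc : ∀ α, α ∉ S → c α = 0) :
    noiseOpF ρ (fun x => ∑ α ∈ S, c α * hermiteMv α x) =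
      fun x => ∑ α ∈ S, (ρ ^ (∑ i, α i) * c α) * hermiteMv α x := by
  funext x
  rw [noiseOpF, hermiteCoeffF_sum S hc]
  exact tsum_eq_sum fun α hα => by simp [hc α hα]

theorem l2sqF_noiseOpF_sum {n : ℕ} (S : Finset (Fin n → ℕ)) {c : (Fin n → ℕ) → ℝ}
    (hc : ∀ α, α ∉ S → c α = 0) :
    l2sqF (noiseOpF (Real.sqrt 3) (fun x => ∑ α ∈ S, c α * hermiteMv α x)) =
      ∑ α ∈ S, 3 ^ (∑ i, α i) * c α ^ 2 := by
  rw [noiseOpF_sum _ S hc, l2sqF_sum]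
  refine Finset.sum_congr rfl fun α _ => ?_
  rw [mul_pow, ← pow_mul, mul_comm _ 2, pow_mul, Real.sq_sqrt (by norm_num)]

theorem hermiteCoeffF_sum_mul_sum {n : ℕ} (S : Finset (Fin n → ℕ)) (a b : (Fin n → ℕ) → ℝ)
    (γ : Fin n → ℕ) :
    hermiteCoeffF (fun x => (∑ α ∈ S, a α * hermiteMv α x) * ∑ α ∈ S, b α * hermiteMv α x) γ =
      hermiteMulCoeff S a b γ := by
  have h : ∀ x, (∑ α ∈ S, a α * hermiteMv α x) * (∑ α ∈ S, b α * hermiteMv α x) *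
      hermiteMv γ x = ∑ α ∈ S, ∑ β ∈ S,
        a α * b β * (hermiteMv α x * hermiteMv β x * hermiteMv γ x) := by
    intro x
    rw [Finset.sum_mul_sum, Finset.sum_mul]
    simp only [Finset.sum_mul]
    refine Finset.sum_congr rfl fun α _ => Finset.sum_congr rfl fun β _ => ?_
    ring
  simp only [hermiteCoeffF, h]
  have hi : ∀ α β : Fin n → ℕ, Integrable
      (fun x => a α * b β * (hermiteMv α x * hermiteMv β x * hermiteMv γ x)) (gaussianN n) :=
    fun α β => (integrable_hermiteMv_triple α β γ).const_mul _
  rw [integral_finsetSum _ fun α _ => integrable_finsetSum _ fun β _ => hi α β]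
  refine Finset.sum_congr rfl fun α _ => ?_
  rw [integral_finsetSum _ fun β _ => hi α β]
  simp only [integral_const_mul, hermiteTriple]

theorem pow_mem_span_hermiteFn (m : ℕ) :
    (fun t : ℝ => t ^ m) ∈ Submodule.span ℝ (Set.range hermiteFn) := by
  have hH : ∀ k, (fun t => (hermiteReal k).eval t) ∈ Submodule.span ℝ (Set.range hermiteFn) := by
    intro k
    have e : (fun t => (hermiteReal k).eval t) = Real.sqrt k.factorial • hermiteFn k := by
      funext t
      rw [Pi.smul_apply, hermiteFn_eq, smul_eq_mul]
      have : Real.sqrt k.factorial ≠ 0 := by positivity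
      field_simp
    rw [e]
    exact Submodule.smul_mem _ _ (Submodule.subset_span ⟨k, rfl⟩)
  have hX : ∀ f ∈ Submodule.span ℝ (Set.range hermiteFn),
      (fun t : ℝ => t * f t) ∈ Submodule.span ℝ (Set.range hermiteFn) := by
    intro f hf
    induction hf using Submodule.span_induction with
    | mem f hf =>
      obtain ⟨k, rfl⟩ := hf
      have hd : (fun t => (Polynomial.derivative (hermiteReal k)).eval t) ∈
          Submodule.span ℝ (Set.range hermiteFn) := by
        cases k with
        | zero =>
          simp only [hermiteReal_zero, Polynomial.derivative_one, Polynomial.eval_zero]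
          exact Submodule.zero_mem _
        | succ k =>
          simp only [derivative_hermiteReal_succ, Polynomial.eval_smul]
          exact Submodule.smul_mem _ _ (hH k)
      have e : (fun t : ℝ => t * hermiteFn k t) = (Real.sqrt k.factorial)⁻¹ •
          ((fun t => (hermiteReal (k + 1)).eval t) +
            fun t => (Polynomial.derivative (hermiteReal k)).eval t) := by
        funext t
        simp only [hermiteReal_succ, Pi.smul_apply, Pi.add_apply, Polynomial.eval_sub,
          Polynomial.eval_mul, Polynomial.eval_X, sub_add_cancel, hermiteFn_eq, smul_eq_mul]
        ring
      rw [e]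
      exact Submodule.smul_mem _ _ (Submodule.add_mem _ (hH _) hd)
    | zero =>
      simp only [Pi.zero_apply, mul_zero]
      exact Submodule.zero_mem _
    | add f g _ _ hf hg =>
      simp only [Pi.add_apply, mul_add]
      exact Submodule.add_mem _ hf hg
    | smul a f _ hf =>
      simp only [Pi.smul_apply, smul_eq_mul, mul_left_comm _ a]
      exact Submodule.smul_mem _ a hf
  induction m with
  | zero =>
    have := hH 0
    simpa [hermiteReal_zero] using this
  | succ m ih => simpa only [pow_succ'] using hX _ ih

theorem eval_mem_span_hermiteMv {n : ℕ} (q : MvPolynomial (Fin n) ℝ) :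
    (fun x => eval x q) ∈
      Submodule.span ℝ (Set.range (hermiteMv : (Fin n → ℕ) → (Fin n → ℝ) → ℝ)) := by
  induction q using MvPolynomial.induction_on' with
  | add p q hp hq =>
    simp only [map_add]
    exact Submodule.add_mem _ hp hq
  | monomial m a =>
    have hm : ∀ i, ∃ c : ℕ →₀ ℝ, (c.sum fun k d => d • hermiteFn k) = fun t : ℝ => t ^ m i :=
      fun i => Finsupp.mem_span_range_iff_exists_finsupp.1 (pow_mem_span_hermiteFn (m i))
    choose c hc using hm
    have e : (fun x => eval x (monomial m a)) =
        a • ∑ α ∈ Fintype.piFinset fun i => (c i).support,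
          (∏ i, c i (α i)) • (hermiteMv α : (Fin n → ℝ) → ℝ) := by
      funext x
      have hx : ∀ i, x i ^ m i = ∑ k ∈ (c i).support, c i k * hermiteFn k (x i) := by
        intro i
        have := congrFun (hc i) (x i)
        rw [← this, Finsupp.sum, Finset.sum_apply]
        rfl
      rw [eval_monomial, Finsupp.prod_fintype _ _ fun i => pow_zero _]
      simp only [hx, Finset.prod_univ_sum, Pi.smul_apply, Finset.sum_apply, smul_eq_mul, hermiteMv,
        Finset.prod_mul_distrib]
    rw [e]
    exact Submodule.smul_mem _ _ (Submodule.sum_mem _ fun α _ =>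
      Submodule.smul_mem _ _ (Submodule.subset_span ⟨α, rfl⟩))

/-- Every polynomial is a finite combination of Hermite polynomials. -/
theorem exists_hermite_expansion {n : ℕ} (q : MvPolynomial (Fin n) ℝ) :
    ∃ (N : ℕ) (c : (Fin n → ℕ) → ℝ), (∀ α, α ∉ multiBox n N → c α = 0) ∧
      (fun x => eval x q) = fun x => ∑ α ∈ multiBox n N, c α * hermiteMv α x := by
  obtain ⟨c, hc⟩ := Finsupp.mem_span_range_iff_exists_finsupp.1 (eval_mem_span_hermiteMv q)
  have hsub : c.support ⊆ multiBox n (c.support.sup (fun α => ∑ i, α i) + 1) := by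
    intro α hα
    refine mem_multiBox.2 fun i => Nat.lt_succ_of_le ?_
    exact (Finset.single_le_sum (f := α) (fun _ _ => Nat.zero_le _) (Finset.mem_univ i)).trans
      (Finset.le_sup (f := fun α : Fin n → ℕ => ∑ i, α i) hα)
  refine ⟨_, c, fun α hα => Finsupp.notMem_support_iff.1 fun h => hα (hsub h), ?_⟩
  rw [← hc, Finsupp.sum_of_support_subset c hsub _ (by simp)]
  funext x
  simp only [Finset.sum_apply, Pi.smul_apply, smul_eq_mul]

/-- High-degree weight of a square: for any polynomial `q` and `k ≥ 1`,
`W^{≥k}[q²] ≤ 4·‖U_{√3}(q^{≥k/2})‖₂²·‖U_{√3} q‖₂²`. -/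
theorem weight_of_square_bound (n : ℕ) (q : MvPolynomial (Fin n) ℝ) (k : ℕ) (hk : 1 ≤ k) :
    weightGE k (q * q) ≤
      4 * l2sqF (noiseOpF (Real.sqrt 3) (highPartHalf k q)) *
        l2sqF (noiseOpF (Real.sqrt 3) (fun x => eval x q)) := by
  obtain ⟨N, c, hc, hq⟩ := exists_hermite_expansion q
  have hcoeff : hermiteCoeff q = c := by
    funext α
    rw [hermiteCoeff, hq, hermiteCoeffF_sum _ hc]
  have hb : ∀ α, α ∉ multiBox n N → (if k ≤ 2 * ∑ i, α i then c α else 0) = 0 :=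
    fun α hα => by simp [hc α hα]
  have hhigh : highPartHalf k q = fun x => ∑ α ∈ multiBox n N,
      (if k ≤ 2 * ∑ i, α i then c α else 0) * hermiteMv α x := by
    funext x
    simp only [highPartHalf, hcoeff, ite_mul, zero_mul]
    exact tsum_eq_sum fun α hα => by simp [hc α hα]
  have hsq : ∀ γ, hermiteCoeff (q * q) γ = hermiteMulCoeff (multiBox n N) c c γ := by
    intro γ
    rw [← hermiteCoeffF_sum_mul_sum, hermiteCoeff]
    congr 1
    funext x
    rw [map_mul, congrFun hq x]
  rw [hhigh, hq, l2sqF_noiseOpF_sum _ hb, l2sqF_noiseOpF_sum _ hc, weightGE]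
  simp only [hsq]
  refine Real.tsum_le_of_sum_le (fun γ => ?_) fun u => sum_sq_high_hermiteMulCoeff_le hc u
  simp only [Pi.zero_apply]
  split_ifs
  · exact sq_nonneg _
  · exact le_rfl
end
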